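/- arXiv:1907.03617 — 3 statements merged into one kernel-verified Lean document; each statement's English description precedes it below -/
import Mathlib

section
/- Let (G, μ) be a weighted graph, let p ∈ [1, ∞), and let Ω ⊊ V be a nonempty proper subset with Ω \ ∂_v Ω nonempty. Then for all r > 0, μ(Ω \ B_r(∂_v Ω)) / μ(Ω) ≤ exp(1 − ν^D_{1,p}(Ω, μ)^{1/p} · r). -/
open scoped BigOperators Classical

noncomputable section

/-- A weighted graph: a simple connected finite graph together with a symmetric
nonnegative weight which is positive exactly on edges. -/
structure WeightedGraph (V : Type*) [Fintype V] where
  G : SimpleGraph V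
  connected : G.Connected
  w : V → V → ℝ
  symm : ∀ x y, w x y = w y x
  nonneg : ∀ x y, 0 ≤ w x y
  pos_iff_adj : ∀ x y, 0 < w x y ↔ G.Adj x y

namespace WeightedGraph

variable {V : Type*} [Fintype V]

/-- The weight `μ(x)` of a vertex. -/
def vwt (W : WeightedGraph V) (x : V) : ℝ := ∑ y, W.w x y

/-- The weight `μ(A)` of a set of vertices. -/
def swt (W : WeightedGraph V) (A : Set V) : ℝ :=
  ∑ x ∈ Finset.univ.filter (· ∈ A), W.vwt x

/-- The weighted mean of a function. -/
def mean (W : WeightedGraph V) (φ : V → ℝ) : ℝ :=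
  (∑ x, φ x * W.vwt x) / W.swt Set.univ

/-- The `p`-energy of a function. -/
def energy (W : WeightedGraph V) (p : ℝ) (φ : V → ℝ) : ℝ :=
  ∑ x, ∑ y, |φ y - φ x| ^ p * W.w x y

/-- The `k`-th discrete `p`-Poincaré constant. -/
def nu (W : WeightedGraph V) (k : ℕ) (p : ℝ) : ℝ :=
  sInf {s | ∃ L : Submodule ℝ (V → ℝ), Module.finrank ℝ L = k ∧
    (∀ φ ∈ L, (∃ c : ℝ, ∀ x, φ x = c) → φ = 0) ∧
    s = sSup {r | ∃ φ ∈ L, φ ≠ 0 ∧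
      r = W.energy p φ / (2 * ∑ x, |φ x - W.mean φ| ^ p * W.vwt x)}}

/-- The `k`-th discrete modified `p`-Poincaré constant. -/
def nuHat (W : WeightedGraph V) (k : ℕ) (p : ℝ) : ℝ :=
  sInf {s | ∃ L : Submodule ℝ (V → ℝ), Module.finrank ℝ L = k + 1 ∧
    s = sSup {r | ∃ φ ∈ L, φ ≠ 0 ∧
      r = W.energy p φ / (2 * ∑ x, |φ x| ^ p * W.vwt x)}}

/-- The vertex boundary of a set of vertices. -/
def vbdry (W : WeightedGraph V) (Ω : Set V) : Set V :=
  {x ∈ Ω | ∃ y ∉ Ω, 0 < W.w x y}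

/-- The `k`-th discrete Dirichlet `p`-Poincaré constant of `Ω`; functions on `Ω`
vanishing on the vertex boundary are modelled as functions on `V` vanishing
outside `Ω \ ∂ᵥΩ`. -/
def nuD (W : WeightedGraph V) (Ω : Set V) (k : ℕ) (p : ℝ) : ℝ :=
  sInf {s | ∃ L : Submodule ℝ (V → ℝ), Module.finrank ℝ L = k ∧
    (∀ φ ∈ L, ∀ x, x ∉ Ω \ W.vbdry Ω → φ x = 0) ∧
    s = sSup {r | ∃ φ ∈ L, φ ≠ 0 ∧
      r = (∑ x ∈ Finset.univ.filter (· ∈ Ω), ∑ y ∈ Finset.univ.filter (· ∈ Ω),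
            |φ y - φ x| ^ p * W.w x y) /
          (2 * ∑ x ∈ Finset.univ.filter (· ∈ Ω), |φ x| ^ p * W.vwt x)}}

/-- The closed `r`-neighborhood of a set of vertices w.r.t. the graph distance. -/
def ball (W : WeightedGraph V) (A : Set V) (r : ℝ) : Set V :=
  {x | ∃ a ∈ A, (W.G.dist x a : ℝ) ≤ r}

/-- The graph distance between two sets of vertices. -/
def setDist (W : WeightedGraph V) (A B : Set V) : ℕ :=
  sInf {n : ℕ | ∃ a ∈ A, ∃ b ∈ B, W.G.dist a b = n}

end WeightedGraph


lemma bc_exp4 {x : ℝ} (h0 : 0 ≤ x) (h1 : x ≤ 1) :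
    Real.exp x ≤ 1 + x + x^2/2 + x^3/6 + 5*x^4/96 := by
  have h := Real.exp_bound' h0 h1 (n := 4) (by norm_num)
  simp [Finset.sum_range_succ, Nat.factorial] at h
  norm_num at h
  linarith

/-- `κ ∈ [1/2,1]`, `p ≤ 3/2`. -/
lemma bc_small {k p : ℝ} (h0 : 1/2 ≤ k) (h1 : k ≤ 1) (hp : p ≤ 3/2) :
    Real.exp k ≤ 1 + 2 * k ^ p := by
  have hk : 0 < k := by linarith
  have h2 : k ^ (3/2:ℝ) ≤ k ^ p := Real.rpow_le_rpow_of_exponent_ge hk h1 hp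
  have h3 : k ^ (3/2:ℝ) = k * Real.sqrt k := by
    rw [Real.sqrt_eq_rpow, show (3/2:ℝ) = 1 + 1/2 by norm_num, Real.rpow_add hk, Real.rpow_one]
  have h4 : 2 * k / (1 + k) ≤ Real.sqrt k := by
    rw [div_le_iff₀ (by linarith)]
    have := Real.sq_sqrt hk.le
    have hs := Real.sqrt_nonneg k
    nlinarith [mul_nonneg hs (sq_nonneg (Real.sqrt k - 1))]
  have h5 : k * (2 * k / (1 + k)) ≤ k * Real.sqrt k := mul_le_mul_of_nonneg_left h4 hk.le
  have h6 := bc_exp4 hk.le h1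
  have h7 : k + k^2/2 + k^3/6 + 5*k^4/96 ≤ 2 * (k * (2 * k / (1 + k))) := by
    rw [show 2 * (k * (2 * k / (1 + k))) = (4 * k^2) / (1+k) by field_simp; ring]
    rw [le_div_iff₀ (by linarith)]
    have : (1+k)*(1 + k/2 + k^2/6 + 5*k^3/96) ≤ 4 * k := by
      have a : k^2 ≤ 3/2*k - 1/2 := by nlinarith
      have b : k^3 ≤ 7/4*k - 3/4 := by nlinarith
      have c : k^4 ≤ 15/8*k - 7/8 := by nlinarith
      nlinarith
    nlinarith
  linarith

/-- `κ ∈ [3/4,1]`, `p ≤ 2`. -/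
lemma bc_mid {k p : ℝ} (h0 : 3/4 ≤ k) (h1 : k ≤ 1) (hp : p ≤ 2) :
    Real.exp k ≤ 1 + 2 * k ^ p := by
  have hk : 0 < k := by linarith
  have h2 : k ^ (2:ℝ) ≤ k ^ p := Real.rpow_le_rpow_of_exponent_ge hk h1 hp
  rw [Real.rpow_two] at h2
  have h6 := bc_exp4 hk.le h1
  have : 1 + k/2 + k^2/6 + 5*k^3/96 ≤ 2 * k := by
    have a : k^2 ≤ 7/4*k - 3/4 := by nlinarith
    have b : k^3 ≤ 37/16*k - 21/16 := by nlinarith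
    linarith
  nlinarith

lemma bc_expone {x : ℝ} (h0 : 0 ≤ x) (h1 : x ≤ 1) :
    Real.exp (1 + x) ≤ 2.71829 * (1 + x + x^2/2 + x^3/6 + 5*x^4/96) := by
  rw [Real.exp_add]
  have := Real.exp_one_lt_d9
  have h := bc_exp4 h0 h1
  have hp := Real.exp_pos x
  have : Real.exp 1 ≤ 2.71829 := by linarith
  exact mul_le_mul this h hp.le (by norm_num)

/-- `κ ∈ [1,3/2]`, `p ≥ 3/2`. -/
lemma bc_big {k p : ℝ} (h0 : 1 ≤ k) (h1 : k ≤ 3/2) (hp : 3/2 ≤ p) :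
    Real.exp k ≤ 1 + 2 * k ^ p := by
  have h2 : k ^ (3/2:ℝ) ≤ k ^ p := Real.rpow_le_rpow_of_exponent_le h0 hp
  have h3 := one_add_mul_self_le_rpow_one_add (s := k - 1) (by linarith) (p := 3/2) (by norm_num)
  rw [add_sub_cancel] at h3
  obtain ⟨x, rfl⟩ : ∃ x, k = 1 + x := ⟨k - 1, by ring⟩
  have h4 := bc_expone (x := x) (by linarith) (by linarith)
  have hx : 0 ≤ x := by linarith
  have a : x^2 ≤ x/2 := by nlinarith
  have b : x^3 ≤ x/4 := by nlinarith
  have c : x^4 ≤ x/8 := by nlinarith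
  linarith

/-- `κ ∈ [1,2]`, `p ≥ 2`. -/
lemma bc_huge {k p : ℝ} (h0 : 1 ≤ k) (h1 : k ≤ 2) (hp : 2 ≤ p) :
    Real.exp k ≤ 1 + 2 * k ^ p := by
  have h2 : k ^ (2:ℝ) ≤ k ^ p := Real.rpow_le_rpow_of_exponent_le h0 hp
  rw [Real.rpow_two] at h2
  obtain ⟨x, rfl⟩ : ∃ x, k = 1 + x := ⟨k - 1, by ring⟩
  have h4 := bc_expone (x := x) (by linarith) (by linarith)
  have hx : 0 ≤ x := by linarith
  have b : x^3 ≤ x^2 := by nlinarith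
  have c : x^4 ≤ x^2 := by nlinarith
  nlinarith

lemma bc_fin1 {x p : ℝ} (h0 : 0 ≤ x) (h1 : x ≤ 3/2) (hp : 1 ≤ p) :
    Real.exp x ≤ 2 * (1 + x) ^ p := by
  have h2 : (1+x) ^ (1:ℝ) ≤ (1+x) ^ p := Real.rpow_le_rpow_of_exponent_le (by linarith) hp
  rw [Real.rpow_one] at h2
  rcases le_total x 1 with h | h
  · have := bc_exp4 h0 h
    have a : x^2 ≤ x := by nlinarith
    have b : x^3 ≤ x := by nlinarith
    have c : x^4 ≤ x := by nlinarith
    linarith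
  · obtain ⟨y, rfl⟩ : ∃ y, x = 1 + y := ⟨x - 1, by ring⟩
    have h4 := bc_expone (x := y) (by linarith) (by linarith)
    have hx : 0 ≤ y := by linarith
    have a : y^2 ≤ y/2 := by nlinarith
    have b : y^3 ≤ y/4 := by nlinarith
    have c : y^4 ≤ y/8 := by nlinarith
    linarith

lemma bc_fin2 {x p : ℝ} (h0 : 0 ≤ x) (h1 : x ≤ 2) (hp : 2 ≤ p) :
    Real.exp x ≤ 2 * (1 + x) ^ p := by
  rcases le_total x 1 with h | h
  · exact bc_fin1 h0 (by linarith) (by linarith)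
  · have h3 := bc_huge h h1 le_rfl
    have h2 : (1+x) ^ (2:ℝ) ≤ (1+x) ^ p := Real.rpow_le_rpow_of_exponent_le (by linarith) hp
    rw [Real.rpow_two] at h2 h3
    nlinarith

/-- Choice of the step length. -/
lemma bc_step {l p : ℝ} (hl : 0 < l) (hl1 : l ≤ 1) (hp : 1 ≤ p) :
    ∃ δ : ℕ, 0 < δ ∧ Real.exp (l * δ) ≤ 1 + 2 * (l * δ) ^ p ∧
      ∀ x, 0 ≤ x → x ≤ l * δ → Real.exp x ≤ 2 * (1 + x) ^ p := by
  set k := ⌊1 / l⌋₊ with hk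
  have hk1 : 1 ≤ k := by
    rw [hk, Nat.one_le_floor_iff, le_div_iff₀ hl]; linarith
  have hkr : (1:ℝ) ≤ k := by exact_mod_cast hk1
  have hf1 : l * k ≤ 1 := by
    have := Nat.floor_le (a := 1 / l) (by positivity)
    rw [← hk, le_div_iff₀ hl] at this; linarith
  have hf2 : 1 < l * (k + 1) := by
    have := Nat.lt_floor_add_one (1 / l)
    rw [← hk, div_lt_iff₀ hl] at this; linarith
  have hlk : l ≤ l * k := by nlinarith
  by_cases h1 : p ≤ 3/2
  · refine ⟨k, hk1, bc_small (by nlinarith) hf1 h1, fun x hx hx' => bc_fin1 hx (by linarith) hp⟩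
  push Not at h1
  by_cases h2 : p ≤ 2
  · by_cases h3 : 3/4 ≤ l * k
    · exact ⟨k, hk1, bc_mid h3 hf1 h2, fun x hx hx' => bc_fin1 hx (by linarith) hp⟩
    · push Not at h3
      refine ⟨k+1, by omega, ?_, ?_⟩
      · push_cast
        exact bc_big hf2.le (by nlinarith) h1.le
      · push_cast
        exact fun x hx hx' => bc_fin1 hx (by nlinarith) hp
  · push Not at h2
    refine ⟨k+1, by omega, ?_, ?_⟩
    · push_cast
      exact bc_huge hf2.le (by nlinarith) h2.le
    · push_cast
      exact fun x hx hx' => bc_fin2 hx (by nlinarith) h2.le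

lemma bc_decay {M N : ℕ → ℝ} {l p : ℝ} (hl : 0 ≤ l) (hl1 : l ≤ 1) (hp : 1 ≤ p)
    (hN : ∀ n, 0 ≤ N n) (hNM : ∀ n, N n ≤ M n) (hM : ∀ n, M n ≤ M 0)
    (key : ∀ s k, 0 < k → 2 * (l * (k:ℕ)) ^ p * M (s + k) ≤ N s - N (s + k)) (n : ℕ) :
    M n ≤ M 0 * Real.exp (1 - l * n) := by
  have hM0 : 0 ≤ M 0 := (hN 0).trans (hNM 0)
  by_cases htriv : l * n ≤ 1
  · have : 1 ≤ Real.exp (1 - l * n) := Real.one_le_exp (by linarith)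
    nlinarith [hM n]
  push Not at htriv
  have hl0 : 0 < l := by
    rcases hl.eq_or_lt with h | h
    · rw [← h] at htriv; norm_num at htriv
    · exact h
  obtain ⟨δ, hδ, h1, h2⟩ := bc_step hl0 hl1 hp
  -- strengthened: start from any s
  have main : ∀ k s : ℕ, 1 ≤ l * k → M (s + k) ≤ N s * Real.exp (1 - l * k) := by
    intro k
    induction k using Nat.strong_induction_on with
    | _ k ih =>
      intro s hk
      by_cases hc : l * k ≤ 1 + l * δ
      · have hk0 : 0 < k := by
          rcases Nat.eq_zero_or_pos k with h | h
          · rw [h] at hk; norm_num at hk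
          · exact h
        have h3 := h2 (l * k - 1) (by linarith) (by linarith)
        rw [add_sub_cancel] at h3
        have h4 := key s k hk0
        have h5 := hN (s + k)
        have h6 : 0 ≤ M (s + k) := h5.trans (hNM _)
        have h7 : Real.exp (l * k - 1) * M (s + k) ≤ N s := by nlinarith
        rw [show 1 - l * k = -(l * k - 1) by ring, Real.exp_neg, ← div_eq_mul_inv,
          le_div_iff₀ (Real.exp_pos _)]
        linarith
      · push Not at hc
        have hlt : δ < k := by
          have : l * δ < l * k := by linarith
          exact_mod_cast lt_of_mul_lt_mul_left this hl
        obtain ⟨j, rfl⟩ := Nat.exists_eq_add_of_lt hlt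
        have h3 := ih (j + 1) (by omega) (s + δ) (by push_cast at hc ⊢; nlinarith)
        have h4 := key s δ hδ
        have h5 : Real.exp (l * δ) * N (s + δ) ≤ N s := by
          have a := hNM (s + δ)
          have b := hN (s + δ)
          have c : 0 ≤ 2 * (l * δ) ^ p := by positivity
          nlinarith
        rw [show s + (δ + j + 1) = s + δ + (j + 1) by ring]
        refine h3.trans ?_
        rw [show (1 - l * ((δ + j + 1 : ℕ):ℝ)) = (1 - l * ((j+1:ℕ):ℝ)) - l * δ by push_cast; ring,
          Real.exp_sub _ (l * δ), mul_div_assoc', le_div_iff₀ (Real.exp_pos _)]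
        have := Real.exp_pos (1 - l * ((j+1:ℕ):ℝ))
        nlinarith
  have := main n 0 htriv.le
  rw [zero_add] at this
  exact this.trans (mul_le_mul_of_nonneg_right (hNM 0) (Real.exp_pos _).le)

namespace WeightedGraph

variable {V : Type*} [Fintype V]

lemma bc_vwt_nonneg (W : WeightedGraph V) (x : V) : 0 ≤ W.vwt x :=
  Finset.sum_nonneg fun y _ => W.nonneg x y

/-- The Rayleigh quotient. -/
def bcQ (W : WeightedGraph V) (Ω : Set V) (p : ℝ) (φ : V → ℝ) : ℝ :=
  (∑ x ∈ Finset.univ.filter (· ∈ Ω), ∑ y ∈ Finset.univ.filter (· ∈ Ω),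
            |φ y - φ x| ^ p * W.w x y) /
          (2 * ∑ x ∈ Finset.univ.filter (· ∈ Ω), |φ x| ^ p * W.vwt x)

lemma bcQ_nonneg (W : WeightedGraph V) (Ω : Set V) (p : ℝ) (φ : V → ℝ) : 0 ≤ W.bcQ Ω p φ := by
  unfold bcQ
  apply div_nonneg
  · exact Finset.sum_nonneg fun x _ => Finset.sum_nonneg fun y _ =>
      mul_nonneg (Real.rpow_nonneg (abs_nonneg _) _) (W.nonneg x y)
  · refine mul_nonneg (by norm_num) (Finset.sum_nonneg fun x _ =>
      mul_nonneg (Real.rpow_nonneg (abs_nonneg _) _) (W.bc_vwt_nonneg x))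

lemma bcQ_smul (W : WeightedGraph V) (Ω : Set V) (p : ℝ) (φ : V → ℝ) (c : ℝ) (hc : c ≠ 0) :
    W.bcQ Ω p (c • φ) = W.bcQ Ω p φ := by
  unfold bcQ
  have hcp : |c| ^ p ≠ 0 := (Real.rpow_pos_of_pos (abs_pos.mpr hc) p).ne'
  have h1 : ∀ x y, |(c • φ) y - (c • φ) x| ^ p * W.w x y = |c| ^ p * (|φ y - φ x| ^ p * W.w x y) := by
    intro x y
    rw [Pi.smul_apply, Pi.smul_apply, smul_eq_mul, smul_eq_mul, ← mul_sub, abs_mul,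
      Real.mul_rpow (abs_nonneg _) (abs_nonneg _), mul_assoc]
  have h2 : ∀ x, |(c • φ) x| ^ p * W.vwt x = |c| ^ p * (|φ x| ^ p * W.vwt x) := by
    intro x
    rw [Pi.smul_apply, smul_eq_mul, abs_mul,
      Real.mul_rpow (abs_nonneg _) (abs_nonneg _), mul_assoc]
  simp only [h1, h2, ← Finset.mul_sum]
  rw [mul_left_comm, mul_div_mul_left _ _ hcp]

lemma bc_set_nonneg (W : WeightedGraph V) (Ω : Set V) (p : ℝ) (L : Submodule ℝ (V → ℝ)) :
    0 ≤ sSup {r | ∃ φ ∈ L, φ ≠ 0 ∧ r = W.bcQ Ω p φ} := by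
  apply Real.sSup_nonneg
  rintro r ⟨φ, _, _, rfl⟩
  exact W.bcQ_nonneg Ω p φ

lemma bc_nuD_nonneg (W : WeightedGraph V) (Ω : Set V) (p : ℝ) : 0 ≤ W.nuD Ω 1 p := by
  apply Real.sInf_nonneg
  rintro s ⟨L, _, _, rfl⟩
  exact W.bc_set_nonneg Ω p L

lemma bc_nuD_le (W : WeightedGraph V) (Ω : Set V) (p : ℝ) (φ : V → ℝ) (hφ : φ ≠ 0)
    (hv : ∀ x, x ∉ Ω \ W.vbdry Ω → φ x = 0) : W.nuD Ω 1 p ≤ W.bcQ Ω p φ := by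
  apply csInf_le
  · refine ⟨0, ?_⟩
    rintro s ⟨L, _, _, rfl⟩
    exact W.bc_set_nonneg Ω p L
  · refine ⟨Submodule.span ℝ {φ}, finrank_span_singleton hφ, ?_, ?_⟩
    · intro ψ hψ x hx
      obtain ⟨c, rfl⟩ := Submodule.mem_span_singleton.mp hψ
      simp [hv x hx]
    · have : {r | ∃ ψ ∈ Submodule.span ℝ {φ}, ψ ≠ 0 ∧ r = W.bcQ Ω p ψ} = {W.bcQ Ω p φ} := by
        ext r
        constructor
        · rintro ⟨ψ, hψ, h0, rfl⟩
          obtain ⟨c, rfl⟩ := Submodule.mem_span_singleton.mp hψ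
          have hc : c ≠ 0 := by rintro rfl; simp at h0
          exact W.bcQ_smul Ω p φ c hc
        · rintro rfl
          exact ⟨φ, Submodule.mem_span_singleton_self φ, hφ, rfl⟩
      exact ((congrArg sSup this).trans (csSup_singleton _)).symm

/-- Mass at depth at least `s`. -/
def bcM (W : WeightedGraph V) (Ω : Set V) (D : V → ℕ) (s : ℕ) : ℝ :=
  ∑ x ∈ Finset.univ.filter (· ∈ Ω), if s ≤ D x then W.vwt x else 0

/-- Edge weight between depth `s - 1` and depth `s`. -/
def bcB (W : WeightedGraph V) (Ω : Set V) (D : V → ℕ) (s : ℕ) : ℝ :=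
  ∑ x ∈ Finset.univ.filter (· ∈ Ω), ∑ y ∈ Finset.univ.filter (· ∈ Ω),
    if D x + 1 = s ∧ D y = s then W.w x y else 0

lemma bcB_nonneg (W : WeightedGraph V) (Ω : Set V) (D : V → ℕ) (s : ℕ) : 0 ≤ W.bcB Ω D s := by
  refine Finset.sum_nonneg fun x _ => Finset.sum_nonneg fun y _ => ?_
  split_ifs
  · exact W.nonneg x y
  · exact le_rfl

lemma bcM_nonneg (W : WeightedGraph V) (Ω : Set V) (D : V → ℕ) (s : ℕ) : 0 ≤ W.bcM Ω D s := by
  refine Finset.sum_nonneg fun x _ => ?_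
  split_ifs
  · exact W.bc_vwt_nonneg x
  · exact le_rfl

lemma bcB_symm (W : WeightedGraph V) (Ω : Set V) (D : V → ℕ) (s : ℕ) : W.bcB Ω D s =
    ∑ x ∈ Finset.univ.filter (· ∈ Ω), ∑ y ∈ Finset.univ.filter (· ∈ Ω),
    if D y + 1 = s ∧ D x = s then W.w x y else 0 := by
  unfold bcB
  rw [Finset.sum_comm]
  refine Finset.sum_congr rfl fun x _ => Finset.sum_congr rfl fun y _ => ?_
  rw [W.symm]

lemma bc_layer (W : WeightedGraph V) (Ω : Set V) (D : V → ℕ) (s : ℕ) :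
    W.bcB Ω D s + W.bcB Ω D (s + 1) ≤ W.bcM Ω D s - W.bcM Ω D (s + 1) := by
  rw [bcB_symm W Ω D s]
  unfold bcB bcM
  rw [← Finset.sum_add_distrib, ← Finset.sum_sub_distrib]
  refine Finset.sum_le_sum fun x _ => ?_
  rw [← Finset.sum_add_distrib]
  by_cases hx : D x = s
  · rw [if_pos hx.ge, if_neg (by omega), sub_zero]
    calc _ ≤ ∑ y ∈ Finset.univ.filter (· ∈ Ω), W.w x y := by
          refine Finset.sum_le_sum fun y _ => ?_
          have := W.nonneg x y
          split_ifs
          · omega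
          · linarith
          · linarith
          · linarith
      _ ≤ W.vwt x := Finset.sum_le_sum_of_subset_of_nonneg (Finset.subset_univ _)
          fun y _ _ => W.nonneg x y
  · have h1 : (if s ≤ D x then W.vwt x else 0) - (if s + 1 ≤ D x then W.vwt x else 0) = 0 := by
      by_cases h : s ≤ D x
      · rw [if_pos h, if_pos (by omega), sub_self]
      · rw [if_neg h, if_neg (by omega), sub_self]
    rw [h1]
    refine (Finset.sum_eq_zero fun y _ => ?_).le
    rw [if_neg (by omega), if_neg (by omega), add_zero]

lemma bc_sumB (W : WeightedGraph V) (Ω : Set V) (D : V → ℕ) (s k : ℕ) :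
    2 * ∑ j ∈ Finset.range k, W.bcB Ω D (s + j + 1) ≤
      (W.bcM Ω D s - W.bcB Ω D s) - (W.bcM Ω D (s + k) - W.bcB Ω D (s + k)) := by
  induction k with
  | zero => simp
  | succ k ih =>
    rw [Finset.sum_range_succ, ← add_assoc]
    have := W.bc_layer Ω D (s + k)
    linarith

lemma bc_test (W : WeightedGraph V) (Ω : Set V) (D : V → ℕ) (p : ℝ) (hp : 1 ≤ p)
    (hD0 : ∀ x, x ∉ Ω \ W.vbdry Ω → D x = 0)
    (hD1 : ∀ x y, W.G.Adj x y → D y ≤ D x + 1) (s k : ℕ) (hk : 0 < k) :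
    W.nuD Ω 1 p * ((k:ℝ) ^ p * W.bcM Ω D (s + k)) ≤
      ∑ j ∈ Finset.range k, W.bcB Ω D (s + j + 1) := by
  by_cases hex : ∃ x, s + k ≤ D x
  swap
  · push Not at hex
    have : W.bcM Ω D (s + k) = 0 := Finset.sum_eq_zero fun x _ => if_neg (by have := hex x; omega)
    rw [this, mul_zero, mul_zero]
    exact Finset.sum_nonneg fun j _ => W.bcB_nonneg Ω D _
  obtain ⟨x₀, hx₀⟩ := hex
  have hx₀Ω : x₀ ∈ Ω := by
    by_contra h
    have := hD0 x₀ (fun h' => h h'.1)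
    omega
  set φ : V → ℝ := fun x => ((min (D x) (s + k) - s : ℕ) : ℝ) with hφ
  have hφtop : ∀ x, s + k ≤ D x → φ x = k := by
    intro x hx
    simp only [hφ]
    rw [min_eq_right hx, Nat.add_sub_cancel_left]
  have hkr : (0:ℝ) < k := by exact_mod_cast hk
  have hφ0 : φ ≠ 0 := by
    intro h
    have := congrFun h x₀
    rw [hφtop x₀ hx₀] at this
    simp at this
    omega
  have hle := W.bc_nuD_le Ω p φ hφ0 (by
    intro x hx
    simp [hφ, hD0 x hx])
  have hden : (k:ℝ) ^ p * W.bcM Ω D (s + k) ≤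
      ∑ x ∈ Finset.univ.filter (· ∈ Ω), |φ x| ^ p * W.vwt x := by
    unfold bcM
    rw [Finset.mul_sum]
    refine Finset.sum_le_sum fun x _ => ?_
    split_ifs with h
    · rw [hφtop x h, abs_of_pos hkr]
    · rw [mul_zero]
      exact mul_nonneg (Real.rpow_nonneg (abs_nonneg _) _) (W.bc_vwt_nonneg x)
  have hnum : (∑ x ∈ Finset.univ.filter (· ∈ Ω), ∑ y ∈ Finset.univ.filter (· ∈ Ω),
            |φ y - φ x| ^ p * W.w x y) ≤ 2 * ∑ j ∈ Finset.range k, W.bcB Ω D (s + j + 1) := by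
    have h2 : 2 * ∑ j ∈ Finset.range k, W.bcB Ω D (s + j + 1) =
        ∑ x ∈ Finset.univ.filter (· ∈ Ω), ∑ y ∈ Finset.univ.filter (· ∈ Ω),
          ∑ j ∈ Finset.range k, ((if D x + 1 = s + j + 1 ∧ D y = s + j + 1 then W.w x y else 0) +
            (if D y + 1 = s + j + 1 ∧ D x = s + j + 1 then W.w x y else 0)) := by
      rw [two_mul]
      nth_rewrite 2 [Finset.sum_congr rfl fun j _ => W.bcB_symm Ω D (s + j + 1)]
      unfold bcB
      rw [← Finset.sum_add_distrib]
      simp only [← Finset.sum_add_distrib]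
      rw [Finset.sum_comm]
      refine Finset.sum_congr rfl fun x _ => ?_
      rw [Finset.sum_comm]
    rw [h2]
    refine Finset.sum_le_sum fun x _ => Finset.sum_le_sum fun y _ => ?_
    have hnn : ∀ j ∈ Finset.range k,
        0 ≤ ((if D x + 1 = s + j + 1 ∧ D y = s + j + 1 then W.w x y else 0) +
            (if D y + 1 = s + j + 1 ∧ D x = s + j + 1 then W.w x y else 0)) := by
      intro j _
      have := W.nonneg x y
      split_ifs <;> linarith
    by_cases heq : φ y = φ x
    · rw [heq, sub_self, abs_zero, Real.zero_rpow (by linarith), zero_mul]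
      exact Finset.sum_nonneg hnn
    by_cases hw : 0 < W.w x y
    swap
    · have : W.w x y = 0 := le_antisymm (not_lt.mp hw) (W.nonneg x y)
      rw [this, mul_zero]
      rw [this] at hnn
      exact Finset.sum_nonneg hnn
    have hadj := (W.pos_iff_adj x y).mp hw
    have a1 := hD1 x y hadj
    have a2 := hD1 y x hadj.symm
    have hne : min (D y) (s + k) - s ≠ min (D x) (s + k) - s := by
      intro h
      exact heq (by simp only [hφ]; rw [h])
    have habs : |φ y - φ x| ≤ 1 := by
      have b1 : min (D y) (s + k) - s ≤ min (D x) (s + k) - s + 1 := by omega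
      have b2 : min (D x) (s + k) - s ≤ min (D y) (s + k) - s + 1 := by omega
      have c1 : φ y ≤ φ x + 1 := by simp only [hφ]; exact_mod_cast b1
      have c2 : φ x ≤ φ y + 1 := by simp only [hφ]; exact_mod_cast b2
      rw [abs_le]; constructor <;> linarith
    have hpow : |φ y - φ x| ^ p ≤ 1 := Real.rpow_le_one (abs_nonneg _) habs (by linarith)
    have hterm : |φ y - φ x| ^ p * W.w x y ≤ W.w x y := by nlinarith
    refine hterm.trans ?_
    have hj : ∃ j < k, (D x + 1 = s + j + 1 ∧ D y = s + j + 1) ∨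
        (D y + 1 = s + j + 1 ∧ D x = s + j + 1) := by
      refine ⟨min (D x) (D y) - s, ?_, ?_⟩ <;> omega
    obtain ⟨j, hjk, hj⟩ := hj
    refine le_trans ?_ (Finset.single_le_sum hnn (Finset.mem_range.mpr hjk))
    have := W.nonneg x y
    rcases hj with hj | hj
    · rw [if_pos hj]; split_ifs <;> linarith
    · rw [if_pos hj]; split_ifs <;> linarith
  have hν := W.bc_nuD_nonneg Ω p
  have hM := W.bcM_nonneg Ω D (s + k)
  set den := ∑ x ∈ Finset.univ.filter (· ∈ Ω), |φ x| ^ p * W.vwt x with hdendef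
  have hden0 : 0 ≤ den := (mul_nonneg (Real.rpow_nonneg hkr.le p) hM).trans hden
  have hfin : W.nuD Ω 1 p * (2 * den) ≤ 2 * ∑ j ∈ Finset.range k, W.bcB Ω D (s + j + 1) := by
    rcases hden0.eq_or_lt with h | h
    · rw [← h, mul_zero, mul_zero]
      exact mul_nonneg (by norm_num) (Finset.sum_nonneg fun j _ => W.bcB_nonneg Ω D _)
    · refine le_trans ?_ hnum
      unfold bcQ at hle
      rwa [le_div_iff₀ (by linarith)] at hle
  have := mul_le_mul_of_nonneg_left hden hν
  linarith

lemma bc_vbdry_nonempty (W : WeightedGraph V) (Ω : Set V) (hne : Ω.Nonempty)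
    (hproper : Ω ≠ Set.univ) : (W.vbdry Ω).Nonempty := by
  obtain ⟨a, ha⟩ := hne
  obtain ⟨b, hb⟩ := (Set.ne_univ_iff_exists_notMem Ω).mp hproper
  obtain ⟨q⟩ := W.connected.preconnected a b
  obtain ⟨d, _, h1, h2⟩ := q.exists_boundary_dart Ω ha hb
  exact ⟨d.fst, h1, d.snd, h2, (W.pos_iff_adj _ _).mpr d.adj⟩

/-- Depth of a vertex. -/
def bcD (W : WeightedGraph V) (Ω : Set V) (x : V) : ℕ :=
  if x ∈ Ω then sInf {n | ∃ a ∈ W.vbdry Ω, W.G.dist x a = n} else 0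

lemma bcD_le (W : WeightedGraph V) (Ω : Set V) (x a : V) (ha : a ∈ W.vbdry Ω) :
    W.bcD Ω x ≤ W.G.dist x a := by
  unfold bcD
  split_ifs
  · exact Nat.sInf_le ⟨a, ha, rfl⟩
  · exact Nat.zero_le _

lemma bcD_exists (W : WeightedGraph V) (Ω : Set V) (hb : (W.vbdry Ω).Nonempty) (x : V)
    (hx : x ∈ Ω) : ∃ a ∈ W.vbdry Ω, W.G.dist x a = W.bcD Ω x := by
  unfold bcD
  rw [if_pos hx]
  obtain ⟨a, ha⟩ := hb
  exact Nat.sInf_mem (s := {n | ∃ a ∈ W.vbdry Ω, W.G.dist x a = n}) ⟨_, a, ha, rfl⟩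

lemma bcD_zero (W : WeightedGraph V) (Ω : Set V) (x : V) (hx : x ∉ Ω \ W.vbdry Ω) :
    W.bcD Ω x = 0 := by
  by_cases h : x ∈ Ω
  · have hb : x ∈ W.vbdry Ω := by
      by_contra h'
      exact hx ⟨h, h'⟩
    have := W.bcD_le Ω x x hb
    simpa using this
  · exact if_neg h

lemma bcD_lip (W : WeightedGraph V) (Ω : Set V) (hb : (W.vbdry Ω).Nonempty) (x y : V)
    (h : W.G.Adj x y) : W.bcD Ω y ≤ W.bcD Ω x + 1 := by
  by_cases hx : x ∈ Ω
  · obtain ⟨a, ha, hxa⟩ := W.bcD_exists Ω hb x hx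
    have h1 := W.bcD_le Ω y a ha
    have h2 := W.connected.dist_triangle (u := y) (v := x) (w := a)
    have h3 : W.G.dist y x = 1 := SimpleGraph.dist_eq_one_iff_adj.mpr h.symm
    omega
  · rw [W.bcD_zero Ω y]
    · omega
    · rintro ⟨hy, hy'⟩
      exact hy' ⟨hy, x, hx, (W.pos_iff_adj _ _).mpr h.symm⟩

end WeightedGraph

open WeightedGraph in
/-- Discrete boundary concentration inequality (Lemma 8.3): for a nonempty
proper subset `Ω ⊊ V` with nonempty interior `Ω \ ∂ᵥΩ` and any `r > 0`,
`μ(Ω \ B_r(∂ᵥΩ)) / μ(Ω) ≤ exp(1 - ν^D_{1,p}(Ω,μ)^{1/p} r)`. -/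
theorem discrete_boundary_concentration
    {V : Type*} [Fintype V] (W : WeightedGraph V) (p : ℝ) (hp : 1 ≤ p)
    (Ω : Set V) (hne : Ω.Nonempty) (hproper : Ω ≠ Set.univ)
    (hint : (Ω \ W.vbdry Ω).Nonempty)
    (r : ℝ) (hr : 0 < r) :
    W.swt (Ω \ W.ball (W.vbdry Ω) r) / W.swt Ω ≤
      Real.exp (1 - W.nuD Ω 1 p ^ (1 / p) * r) := by
  have hb := W.bc_vbdry_nonempty Ω hne hproper
  have hp0 : 0 < p := by linarith
  set D := W.bcD Ω with hD
  have hD0 : ∀ x, x ∉ Ω \ W.vbdry Ω → D x = 0 := W.bcD_zero Ω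
  have hD1 : ∀ x y, W.G.Adj x y → D y ≤ D x + 1 := W.bcD_lip Ω hb
  have hν := W.bc_nuD_nonneg Ω p
  set ν := W.nuD Ω 1 p with hνdef
  set l := ν ^ (1 / p) with hl
  have hl0 : 0 ≤ l := Real.rpow_nonneg hν _
  have hlp : l ^ p = ν := by
    rw [hl, ← Real.rpow_mul hν, one_div, inv_mul_cancel₀ hp0.ne', Real.rpow_one]
  have hBM : ∀ n, W.bcB Ω D n ≤ W.bcM Ω D n := by
    intro n
    have h1 := W.bc_layer Ω D n
    have h2 := W.bcB_nonneg Ω D (n + 1)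
    have h3 := W.bcM_nonneg Ω D (n + 1)
    linarith
  have hM0 : W.bcM Ω D 0 = W.swt Ω := by
    unfold bcM swt
    exact Finset.sum_congr rfl fun x _ => if_pos (Nat.zero_le _)
  have hMle : ∀ n, W.bcM Ω D n ≤ W.bcM Ω D 0 := by
    intro n
    refine Finset.sum_le_sum fun x _ => ?_
    have := W.bc_vwt_nonneg x
    rw [if_pos (Nat.zero_le _)]
    split_ifs <;> linarith
  -- positivity of the mass of the interior
  have hM1 : 0 < W.bcM Ω D 1 := by
    obtain ⟨x, hx, hxb⟩ := hint
    have hDx : 1 ≤ D x := by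
      obtain ⟨a, ha, hxa⟩ := W.bcD_exists Ω hb x hx
      have hne' : x ≠ a := by
        rintro rfl
        exact hxb ha
      have := W.connected.pos_dist_of_ne hne'
      rw [hxa] at this
      exact this
    have hvx : 0 < W.vwt x := by
      obtain ⟨a, ha⟩ := hb
      have hne' : x ≠ a := by
        rintro rfl
        exact hxb ha
      have : Nontrivial V := ⟨x, a, hne'⟩
      obtain ⟨y, hy⟩ := W.connected.preconnected.exists_adj_of_nontrivial x
      exact lt_of_lt_of_le ((W.pos_iff_adj x y).mpr hy)
        (Finset.single_le_sum (f := fun y => W.w x y) (fun y _ => W.nonneg x y)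
          (Finset.mem_univ y))
    have hle : (if 1 ≤ D x then W.vwt x else 0) ≤ W.bcM Ω D 1 := by
      refine Finset.single_le_sum (f := fun x => if 1 ≤ D x then W.vwt x else 0)
        (fun y _ => ?_) (Finset.mem_filter.mpr ⟨Finset.mem_univ x, hx⟩)
      have := W.bc_vwt_nonneg y
      split_ifs <;> linarith
    rw [if_pos hDx] at hle
    linarith
  have hν1 : ν ≤ 1 := by
    have h1 := W.bc_test Ω D p hp hD0 hD1 0 1 one_pos
    simp only [Nat.cast_one, Real.one_rpow, one_mul, zero_add, Finset.sum_range_one] at h1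
    have h2 := hBM 1
    by_contra hcon
    push Not at hcon
    nlinarith
  have hl1 : l ≤ 1 := Real.rpow_le_one hν hν1 (by positivity)
  have hdec := bc_decay (M := W.bcM Ω D) (N := fun n => W.bcM Ω D n - W.bcB Ω D n)
    hl0 hl1 hp (fun n => sub_nonneg.mpr (hBM n))
    (fun n => sub_le_self _ (W.bcB_nonneg Ω D n)) hMle (by
      intro s k hk
      have h1 := W.bc_test Ω D p hp hD0 hD1 s k hk
      have h2 := W.bc_sumB Ω D s k
      rw [Real.mul_rpow hl0 (Nat.cast_nonneg k), hlp]
      nlinarith) (⌊r⌋₊ + 1)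
  have hpos : 0 < W.swt Ω := by
    rw [← hM0]
    exact hM1.trans_le (hMle 1)
  have hset : W.swt (Ω \ W.ball (W.vbdry Ω) r) ≤ W.bcM Ω D (⌊r⌋₊ + 1) := by
    unfold swt bcM
    rw [← Finset.sum_filter, Finset.filter_filter]
    refine Finset.sum_le_sum_of_subset_of_nonneg ?_ fun x _ _ => W.bc_vwt_nonneg x
    intro x hx
    replace hx := (@Finset.mem_filter _ _ (fun a => Classical.propDecidable _) _ _).mp hx
    rw [Finset.mem_filter]
    refine ⟨hx.1, hx.2.1, ?_⟩
    obtain ⟨a, ha, hxa⟩ := W.bcD_exists Ω hb x hx.2.1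
    have hlt : r < (W.G.dist x a : ℝ) := by
      by_contra hcon
      exact hx.2.2 ⟨a, ha, not_lt.mp hcon⟩
    have := (Nat.floor_lt hr.le).mpr hlt
    rw [hxa] at this
    exact this
  rw [div_le_iff₀ hpos, mul_comm]
  refine hset.trans (hdec.trans ?_)
  rw [hM0]
  refine mul_le_mul_of_nonneg_left (Real.exp_le_exp.mpr ?_) hpos.le
  have := Nat.lt_floor_add_one r
  push_cast
  nlinarith
end
end

section
/- Let (G, μ) be a weighted graph, let p ∈ [1, ∞), and let k be an integer with 1 ≤ k ≤ #V − 1. Let A_0, A_1, …, A_k be nonempty pairwise disjoint subsets of V, and set D := min_{α ≠ β} d(A_α, A_β), where d is the graph distance. Then ν̂_{k,p}(G, μ)^{1/p} ≤ (2 / D) · max_{α = 0, …, k} log( e · (μ(V) − ∑_{β ≠ α} μ(A_β)) / μ(A_α) ). -/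
open scoped BigOperators Classical

noncomputable section

namespace SepAux

/-- radial profile -/
def hf (a T t : ℝ) : ℝ :=
  if t ≤ T then Real.exp (-(a * t)) else max 0 (Real.exp (-(a * T)) * (1 - a * (t - T)))

/-- slope of the radial profile -/
def gf (a T t : ℝ) : ℝ :=
  if t ≤ T + 1 / a then a * Real.exp (-(a * min t T)) else 0

lemma hf_nonneg (a T t : ℝ) : 0 ≤ hf a T t := by
  unfold hf; split_ifs
  · positivity
  · exact le_max_left _ _

lemma gf_nonneg {a : ℝ} (ha : 0 < a) (T t : ℝ) : 0 ≤ gf a T t := by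
  unfold gf; split_ifs <;> positivity

lemma hf_zero {a T t : ℝ} (ha : 0 < a) (ht : T + 1 / a ≤ t) : hf a T t = 0 := by
  have h1 : 0 < 1 / a := by positivity
  have h2 : a * (1 / a) = 1 := by field_simp
  unfold hf
  rw [if_neg (by linarith)]
  apply max_eq_left
  apply mul_nonpos_of_nonneg_of_nonpos (by positivity)
  nlinarith

lemma hf_at_zero {a T : ℝ} (hT : 0 ≤ T) : hf a T 0 = 1 := by
  simp [hf, hT]

lemma exp_trap {z : ℝ} (hz : 0 ≤ z) : 1 - Real.exp (-z) ≤ z * (1 + Real.exp (-z)) / 2 := by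
  have key : MonotoneOn (fun z : ℝ => z * (1 + Real.exp (-z)) / 2 + Real.exp (-z)) (Set.Ici 0) := by
    have hd : ∀ x : ℝ, HasDerivAt (fun z : ℝ => z * (1 + Real.exp (-z)) / 2 + Real.exp (-z))
        ((1 * (1 + Real.exp (-x)) + x * (Real.exp (-x) * (-1))) / 2 + Real.exp (-x) * (-1)) x := by
      intro x
      have he : HasDerivAt (fun z : ℝ => Real.exp (-z)) (Real.exp (-x) * (-1)) x :=
        (hasDerivAt_neg x).exp
      exact (((hasDerivAt_id x).mul (he.const_add 1)).div_const 2).add he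
    apply monotoneOn_of_deriv_nonneg (convex_Ici 0)
    · exact fun x _ => (hd x).continuousAt.continuousWithinAt
    · exact fun x _ => (hd x).differentiableAt.differentiableWithinAt
    · intro x _
      rw [(hd x).deriv]
      have h1 : x + 1 ≤ Real.exp x := Real.add_one_le_exp x
      have h2 : Real.exp x * Real.exp (-x) = 1 := by rw [← Real.exp_add]; simp
      have h3 := Real.exp_pos (-x)
      nlinarith
  have := key (Set.mem_Ici.2 le_rfl) (Set.mem_Ici.2 hz) hz
  simp at this
  linarith

lemma exp_diff {a u v : ℝ} (ha : 0 < a) (huv : u ≤ v) :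
    Real.exp (-(a * u)) - Real.exp (-(a * v)) ≤
      a * (v - u) * (Real.exp (-(a * u)) + Real.exp (-(a * v))) / 2 := by
  have h := exp_trap (z := a * (v - u)) (mul_nonneg ha.le (sub_nonneg.2 huv))
  have e : Real.exp (-(a * v)) = Real.exp (-(a * u)) * Real.exp (-(a * (v - u))) := by
    rw [← Real.exp_add]; congr 1; ring
  rw [e]
  have h3 := Real.exp_pos (-(a * u))
  nlinarith

lemma hf_mid {a T t : ℝ} (ha : 0 < a) (h1 : T ≤ t) (h2 : t ≤ T + 1 / a) :
    hf a T t = Real.exp (-(a * T)) * (1 - a * (t - T)) := by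
  have h3 : a * (1 / a) = 1 := by field_simp
  unfold hf
  split_ifs with h
  · have : t = T := le_antisymm h h1
    subst this; simp
  · apply max_eq_right
    apply mul_nonneg (by positivity)
    nlinarith

lemma hf_diff {a T u v : ℝ} (ha : 0 < a) (huv : u ≤ v) (hv : v ≤ T + 1 / a) :
    hf a T u - hf a T v ≤
      a * (v - u) * (Real.exp (-(a * min u T)) + Real.exp (-(a * min v T))) / 2 := by
  rcases le_total v T with h | h
  · rw [min_eq_left h, min_eq_left (huv.trans h)]
    unfold hf
    rw [if_pos h, if_pos (huv.trans h)]
    exact exp_diff ha huv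
  · rw [hf_mid ha h hv, min_eq_right h]
    rcases le_total u T with h' | h'
    · rw [min_eq_left h']
      have := exp_diff ha h'
      have e : Real.exp (-(a * T)) ≤ Real.exp (-(a * u)) := by
        apply Real.exp_le_exp.2; nlinarith
      unfold hf
      rw [if_pos h']
      have : 0 ≤ a * (v - T) * (Real.exp (-(a * u)) - Real.exp (-(a * T))) :=
        mul_nonneg (mul_nonneg ha.le (by linarith)) (by linarith)
      nlinarith
    · rw [min_eq_right h', hf_mid ha h' (huv.trans hv)]
      apply le_of_eq; ring

lemma hf_anti {a T u v : ℝ} (ha : 0 < a) (huv : u ≤ v) : hf a T v ≤ hf a T u := by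
  rcases le_total (T + 1 / a) v with h | h
  · rw [hf_zero ha h]; exact hf_nonneg _ _ _
  rcases le_total v T with h' | h'
  · unfold hf
    rw [if_pos h', if_pos (huv.trans h')]
    apply Real.exp_le_exp.2; nlinarith
  · rw [hf_mid ha h' h]
    have e0 := Real.exp_pos (-(a * T))
    rcases le_total u T with h'' | h''
    · unfold hf
      rw [if_pos h'']
      have e : Real.exp (-(a * T)) ≤ Real.exp (-(a * u)) := by
        apply Real.exp_le_exp.2; nlinarith
      have : 0 ≤ Real.exp (-(a * T)) * (a * (v - T)) :=
        mul_nonneg e0.le (mul_nonneg ha.le (by linarith))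
      nlinarith
    · rw [hf_mid ha h'' (huv.trans h)]
      apply mul_le_mul_of_nonneg_left _ e0.le
      nlinarith

/-- half-edge bound at the boundary of the support -/
lemma hf_half {a T : ℝ} (ha : 0 < a) {D i : ℕ} (hR : T + 1 / a = (D : ℝ) / 2)
    (h2 : D ≤ 2 * i + 1) : hf a T i ≤ gf a T i / 2 := by
  rcases le_total (T + 1 / a) i with h | h
  · rw [hf_zero ha h]; have := gf_nonneg ha T i; linarith
  · have := hf_diff ha h le_rfl
    rw [hf_zero ha le_rfl] at this
    unfold gf; rw [if_pos h]
    have h2' : (D : ℝ) ≤ 2 * i + 1 := by exact_mod_cast h2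
    have hm : min (i : ℝ) T ≤ min (T + 1 / a) T := min_le_min_right _ h
    have e : Real.exp (-(a * min (T + 1 / a) T)) ≤ Real.exp (-(a * min (i : ℝ) T)) := by
      apply Real.exp_le_exp.2; nlinarith
    have e0 := Real.exp_pos (-(a * min (i : ℝ) T))
    have h5 : T + 1 / a - i ≤ 1 / 2 := by linarith
    have h6 : 0 ≤ T + 1 / a - i := by linarith
    set X := Real.exp (-(a * min (i : ℝ) T))
    set Y := Real.exp (-(a * min (T + 1 / a) T))
    have : a * (T + 1 / a - i) * (X + Y) ≤ a * (1 / 2) * (X + X) := by gcongr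
    linarith

lemma hf_edge_aux {a T : ℝ} (ha : 0 < a) {D i j : ℕ} (hR : T + 1 / a = (D : ℝ) / 2)
    (h1 : i ≤ j) (h2 : j ≤ i + 1) :
    |hf a T i - hf a T j| ≤ (gf a T i + gf a T j) / 2 := by
  have hij : (i : ℝ) ≤ j := by exact_mod_cast h1
  have hij' : (j : ℝ) ≤ i + 1 := by exact_mod_cast h2
  rw [abs_of_nonneg (by linarith [hf_anti (T := T) ha hij])]
  by_cases h : (j : ℝ) ≤ T + 1 / a
  · have := hf_diff ha hij h
    unfold gf
    rw [if_pos h, if_pos (hij.trans h)]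
    have e0 := Real.exp_pos (-(a * min (i : ℝ) T))
    have e1 := Real.exp_pos (-(a * min (j : ℝ) T))
    have : a * (j - i) * (Real.exp (-(a * min (i : ℝ) T)) + Real.exp (-(a * min (j : ℝ) T)))
      ≤ a * 1 * (Real.exp (-(a * min (i : ℝ) T)) + Real.exp (-(a * min (j : ℝ) T))) := by
      gcongr; linarith
    linarith
  · push Not at h
    rw [hf_zero ha h.le]
    have : D ≤ 2 * i + 1 := by
      have : (D : ℝ) < 2 * i + 2 := by linarith
      have : D < 2 * i + 2 := by exact_mod_cast this
      omega
    have := hf_half ha hR this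
    have := gf_nonneg ha T j
    linarith

lemma hf_edge {a T : ℝ} (ha : 0 < a) {D i j : ℕ} (hR : T + 1 / a = (D : ℝ) / 2)
    (h1 : i ≤ j + 1) (h2 : j ≤ i + 1) :
    |hf a T i - hf a T j| ≤ (gf a T i + gf a T j) / 2 := by
  rcases le_total i j with h | h
  · exact hf_edge_aux ha hR h h2
  · rw [abs_sub_comm, add_comm]; exact hf_edge_aux ha hR h h1

lemma gf_rpow_le {a T p : ℝ} (ha : 0 < a) (hp : 1 ≤ p) (t : ℝ) :
    gf a T t ^ p ≤ a ^ p * (hf a T t ^ p +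
      if t ≤ T + 1 / a then Real.exp (-(a * T)) ^ p else 0) := by
  have hh := Real.rpow_nonneg (hf_nonneg a T t) p
  unfold gf
  split_ifs with h
  · rw [Real.mul_rpow ha.le (Real.exp_pos _).le]
    gcongr
    rcases le_total t T with h' | h'
    · rw [min_eq_left h']
      have : hf a T t = Real.exp (-(a * t)) := by unfold hf; rw [if_pos h']
      rw [this]
      have : 0 ≤ Real.exp (-(a * T)) ^ p := by positivity
      linarith
    · rw [min_eq_right h']; linarith
  · rw [Real.zero_rpow (by linarith)]
    simp; positivity

lemma pow_mean {p P Q z : ℝ} (hp : 1 ≤ p) (hP : 0 ≤ P) (hQ : 0 ≤ Q) (hz : |z| ≤ (P + Q) / 2) :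
    |z| ^ p ≤ (P ^ p + Q ^ p) / 2 := by
  have h := (convexOn_rpow hp).2 (Set.mem_Ici.2 hP) (Set.mem_Ici.2 hQ)
    (by norm_num : (0 : ℝ) ≤ 1 / 2) (by norm_num : (0 : ℝ) ≤ 1 / 2) (by norm_num)
  simp only [smul_eq_mul] at h
  calc |z| ^ p ≤ ((P + Q) / 2) ^ p := Real.rpow_le_rpow (abs_nonneg _) hz (by linarith)
    _ = (1 / 2 * P + 1 / 2 * Q) ^ p := by congr 1; ring
    _ ≤ _ := h
    _ = _ := by ring

variable {V : Type*} [Fintype V]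

/-- distance from a vertex to a set -/
def dd (W : WeightedGraph V) (A : Set V) (x : V) : ℕ :=
  sInf {n : ℕ | ∃ z ∈ A, W.G.dist x z = n}

lemma dd_le (W : WeightedGraph V) {A : Set V} (x : V) {z : V} (hz : z ∈ A) :
    dd W A x ≤ W.G.dist x z := Nat.sInf_le ⟨z, hz, rfl⟩

lemma dd_mem (W : WeightedGraph V) {A : Set V} (hA : A.Nonempty) (x : V) :
    ∃ z ∈ A, W.G.dist x z = dd W A x := by
  obtain ⟨z, hz⟩ := hA
  exact Nat.sInf_mem (s := {n : ℕ | ∃ z ∈ A, W.G.dist x z = n}) ⟨_, z, hz, rfl⟩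

lemma dd_zero (W : WeightedGraph V) {A : Set V} {x : V} (hx : x ∈ A) : dd W A x = 0 := by
  have := dd_le W x hx
  simpa using this

lemma dd_lip (W : WeightedGraph V) {A : Set V} (hA : A.Nonempty) (x y : V) :
    dd W A x ≤ dd W A y + W.G.dist x y := by
  obtain ⟨z, hz, h⟩ := dd_mem W hA y
  have h1 := dd_le W x hz
  have h2 := W.connected.dist_triangle (u := x) (v := y) (w := z)
  omega

lemma dd_sep (W : WeightedGraph V) {A B : Set V} (hA : A.Nonempty) (hB : B.Nonempty) (x y : V) :
    W.setDist A B ≤ dd W A x + dd W B y + W.G.dist x y := by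
  obtain ⟨z, hz, h⟩ := dd_mem W hA x
  obtain ⟨z', hz', h'⟩ := dd_mem W hB y
  have h1 : W.setDist A B ≤ W.G.dist z z' := Nat.sInf_le ⟨z, hz, z', hz', rfl⟩
  have h2 := W.connected.dist_triangle (u := z) (v := x) (w := z')
  have h3 := W.connected.dist_triangle (u := x) (v := y) (w := z')
  have h4 : W.G.dist z x = W.G.dist x z := SimpleGraph.dist_comm
  omega

lemma setDist_pos (W : WeightedGraph V) {A B : Set V} (hA : A.Nonempty) (hB : B.Nonempty)
    (hd : Disjoint A B) : 1 ≤ W.setDist A B := by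
  obtain ⟨z, hz⟩ := hA
  obtain ⟨z', hz'⟩ := hB
  obtain ⟨u, hu, v, hv, h⟩ := Nat.sInf_mem
    (s := {n : ℕ | ∃ a ∈ A, ∃ b ∈ B, W.G.dist a b = n}) ⟨_, z, hz, z', hz', rfl⟩
  unfold WeightedGraph.setDist
  rw [← h]
  have : u ≠ v := fun e => Set.disjoint_left.1 hd hu (e ▸ hv)
  exact W.connected.pos_dist_of_ne this

lemma vwt_nonneg (W : WeightedGraph V) (x : V) : 0 ≤ W.vwt x :=
  Finset.sum_nonneg fun y _ => W.nonneg x y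

lemma vwt_pos (W : WeightedGraph V) (hc : 1 < Fintype.card V) (x : V) : 0 < W.vwt x := by
  haveI : Nontrivial V := Fintype.one_lt_card_iff_nontrivial.1 hc
  obtain ⟨y, hy⟩ := W.connected.preconnected.exists_adj_of_nontrivial x
  have h1 : 0 < W.w x y := (W.pos_iff_adj x y).2 hy
  exact h1.trans_le (Finset.single_le_sum (f := fun y => W.w x y)
    (fun z _ => W.nonneg x z) (Finset.mem_univ y))

lemma swt_pos (W : WeightedGraph V) (hc : 1 < Fintype.card V) {A : Set V} (hA : A.Nonempty) :
    0 < W.swt A := by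
  obtain ⟨z, hz⟩ := hA
  exact Finset.sum_pos (fun x _ => vwt_pos W hc x) ⟨z, by simpa using hz⟩

lemma swt_eq (W : WeightedGraph V) (A : Set V) :
    W.swt A = ∑ x, if x ∈ A then W.vwt x else 0 := by
  unfold WeightedGraph.swt; rw [Finset.sum_filter]

/-- A set disjoint from all other `A β` has weight at most the remaining weight. -/
lemma swt_compl (W : WeightedGraph V) {n : ℕ} (A : Fin n → Set V)
    (hdisj : ∀ α β, α ≠ β → Disjoint (A α) (A β)) (α : Fin n) (B : Set V)
    (hB : ∀ β, β ≠ α → Disjoint B (A β)) :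
    W.swt B ≤ W.swt Set.univ - ∑ β ∈ Finset.univ.erase α, W.swt (A β) := by
  have : W.swt B + ∑ β ∈ Finset.univ.erase α, W.swt (A β) ≤ W.swt Set.univ := by
    simp only [swt_eq]
    rw [Finset.sum_comm, ← Finset.sum_add_distrib]
    apply Finset.sum_le_sum
    intro x _
    simp only [Set.mem_univ, if_true]
    have hv := vwt_nonneg W x
    by_cases hx : ∃ β, β ≠ α ∧ x ∈ A β
    · obtain ⟨β, hβ, hxβ⟩ := hx
      rw [if_neg (fun h => Set.disjoint_left.1 (hB β hβ) h hxβ),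
        Finset.sum_eq_single_of_mem β (by simp [hβ])]
      · simp [hxβ]
      · intro γ _ hγ
        rw [if_neg (fun h => Set.disjoint_left.1 (hdisj γ β hγ) h hxβ)]
    · push Not at hx
      rw [Finset.sum_eq_zero]
      · split_ifs <;> simp [hv]
      · intro γ hγ
        rw [if_neg (hx γ (Finset.ne_of_mem_erase hγ))]
  linarith

end SepAux

open WeightedGraph in
/-- Discrete analogue of Theorem 3.1: for nonempty pairwise disjoint subsets
`A_0, …, A_k ⊆ V`, with `D := min_{α ≠ β} d(A_α, A_β)`,
`ν̂_{k,p}(G,μ)^{1/p} ≤ (2/D) max_α log(e (μ(V) - ∑_{β ≠ α} μ(A_β)) / μ(A_α))`. -/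
theorem nuHat_rpow_le_of_separated_sets
    {V : Type*} [Fintype V] (W : WeightedGraph V) (p : ℝ) (hp : 1 ≤ p)
    (k : ℕ) (hk₁ : 1 ≤ k) (hk₂ : k ≤ Fintype.card V - 1)
    (A : Fin (k + 1) → Set V) (hne : ∀ α, (A α).Nonempty)
    (hdisj : ∀ α β, α ≠ β → Disjoint (A α) (A β))
    (D : ℕ) (hD : D = sInf {n : ℕ | ∃ α β, α ≠ β ∧ n = W.setDist (A α) (A β)}) :
    W.nuHat k p ^ (1 / p) ≤
      (2 / (D : ℝ)) * ⨆ α, Real.log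
        (Real.exp 1 * (W.swt Set.univ - ∑ β ∈ Finset.univ.erase α, W.swt (A β)) /
          W.swt (A α)) := by
  have hc : 1 < Fintype.card V := by omega
  have hp0 : 0 < p := by linarith
  -- the separation distance
  have hDle : ∀ α β, α ≠ β → D ≤ W.setDist (A α) (A β) := by
    intro α β h
    rw [hD]; exact Nat.sInf_le ⟨α, β, h, rfl⟩
  have hD1 : 1 ≤ D := by
    have h01 : (0 : Fin (k + 1)) ≠ Fin.last k := by
      intro h
      have := congrArg Fin.val h
      simp at this; omega
    obtain ⟨α, β, h, h'⟩ := Nat.sInf_mem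
      (s := {n : ℕ | ∃ α β, α ≠ β ∧ n = W.setDist (A α) (A β)}) ⟨_, 0, Fin.last k, h01, rfl⟩
    rw [hD, h']
    exact SepAux.setDist_pos W (hne α) (hne β) (hdisj α β h)
  have hD0 : (0 : ℝ) < D := by exact_mod_cast hD1
  -- the logarithms
  set N : Fin (k + 1) → ℝ := fun α =>
    W.swt Set.univ - ∑ β ∈ Finset.univ.erase α, W.swt (A β) with hN
  have hm : ∀ α, 0 < W.swt (A α) := fun α => SepAux.swt_pos W hc (hne α)
  have hmN : ∀ α, W.swt (A α) ≤ N α := fun α =>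
    SepAux.swt_compl W A hdisj α (A α) (fun β h => hdisj α β h.symm)
  have hNpos : ∀ α, 0 < N α := fun α => (hm α).trans_le (hmN α)
  have hlog : ∀ α, Real.log (Real.exp 1 * N α / W.swt (A α))
      = 1 + Real.log (N α / W.swt (A α)) := by
    intro α
    rw [mul_div_assoc, Real.log_mul (Real.exp_pos 1).ne'
      (div_pos (hNpos α) (hm α)).ne', Real.log_exp]
  set M : ℝ := ⨆ α, Real.log (Real.exp 1 * N α / W.swt (A α)) with hM
  have hMle : ∀ α, 1 + Real.log (N α / W.swt (A α)) ≤ M := by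
    intro α
    rw [← hlog]
    exact le_ciSup (f := fun α => Real.log (Real.exp 1 * N α / W.swt (A α)))
      (Set.finite_range _).bddAbove α
  have hM1 : 1 ≤ M := by
    have h := hMle 0
    have : 0 ≤ Real.log (N 0 / W.swt (A 0)) :=
      Real.log_nonneg ((one_le_div (hm 0)).2 (hmN 0))
    linarith
  change W.nuHat k p ^ (1 / p) ≤ 2 / (D : ℝ) * M
  set a : ℝ := 2 / (D : ℝ) * M with ha_def
  have ha : 0 < a := by positivity
  set T : ℝ := (D : ℝ) / 2 - 1 / a with hT_def
  have hR : T + 1 / a = (D : ℝ) / 2 := by rw [hT_def]; ring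
  have haD : a * ((D : ℝ) / 2) = M := by rw [ha_def]; field_simp
  have haT : a * T = M - 1 := by
    rw [hT_def, mul_sub, haD]; field_simp
  have hT0 : 0 ≤ T := by
    by_contra h
    push Not at h
    nlinarith
  -- test functions
  set δ : Fin (k + 1) → V → ℕ := fun α x => SepAux.dd W (A α) x with hδ
  set h : Fin (k + 1) → V → ℝ := fun α x => SepAux.hf a T (δ α x) with hh
  set g : Fin (k + 1) → V → ℝ := fun α x => SepAux.gf a T (δ α x) with hg
  have hh0 : ∀ α x, 0 ≤ h α x := fun α x => SepAux.hf_nonneg _ _ _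
  have hg0 : ∀ α x, 0 ≤ g α x := fun α x => SepAux.gf_nonneg ha _ _
  have hsep : ∀ α β, α ≠ β → ∀ x y, D ≤ δ α x + δ β y + W.G.dist x y := fun α β hab x y =>
    (hDle α β hab).trans (SepAux.dd_sep W (hne α) (hne β) x y)
  have hsupp : ∀ α x, h α x ≠ 0 → 2 * δ α x < D := by
    intro α x hx
    by_contra hcon
    push Not at hcon
    apply hx
    apply SepAux.hf_zero ha
    rw [hR]
    have : (D : ℝ) ≤ 2 * (δ α x : ℝ) := by exact_mod_cast hcon
    linarith
  have hexcl : ∀ α β x, α ≠ β → h α x ≠ 0 → h β x = 0 := by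
    intro α β x hab hx
    by_contra hy
    have h1 := hsupp α x hx
    have h2 := hsupp β x hy
    have h3 := hsep α β hab x x
    simp at h3
    omega
  have hsum : ∀ (c : Fin (k + 1) → ℝ) α x, h α x ≠ 0 → ∑ β, c β * h β x = c α * h α x := by
    intro c α x hx
    apply Finset.sum_eq_single_of_mem α (Finset.mem_univ _)
    intro β _ hβ
    rw [hexcl α β x hβ.symm hx, mul_zero]
  have hhA : ∀ α x, x ∈ A α → h α x = 1 := by
    intro α x hx
    simp only [hh, hδ, SepAux.dd_zero W hx, Nat.cast_zero]
    exact SepAux.hf_at_zero hT0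
  -- the one-set estimate
  have hone : ∀ α, ∑ x, g α x ^ p * W.vwt x ≤ 2 * a ^ p * ∑ x, h α x ^ p * W.vwt x := by
    intro α
    set E := Real.exp (-(a * T)) ^ p with hE
    set B : Set V := {x | (δ α x : ℝ) ≤ T + 1 / a} with hB
    have h1 : ∑ x, g α x ^ p * W.vwt x ≤
        a ^ p * (∑ x, h α x ^ p * W.vwt x + E * W.swt B) := by
      rw [SepAux.swt_eq, Finset.mul_sum, ← Finset.sum_add_distrib, Finset.mul_sum]
      apply Finset.sum_le_sum
      intro x _
      have := mul_le_mul_of_nonneg_right (SepAux.gf_rpow_le (T := T) ha hp (δ α x : ℝ))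
        (SepAux.vwt_nonneg W x)
      refine this.trans (le_of_eq ?_)
      simp only [hB, Set.mem_setOf_eq, hh]
      split_ifs <;> ring
    have h2 : W.swt B ≤ N α := by
      apply SepAux.swt_compl W A hdisj α B
      intro β hβ
      rw [Set.disjoint_left]
      intro x hx hx'
      have h3 := hsep α β hβ.symm x x
      have h4 : δ β x = 0 := SepAux.dd_zero W hx'
      simp [h4] at h3
      have h5 : (δ α x : ℝ) ≤ T + 1 / a := hx
      rw [hR] at h5
      have h6 : (D : ℝ) ≤ δ α x := by exact_mod_cast h3
      linarith
    have h3 : W.swt (A α) ≤ ∑ x, h α x ^ p * W.vwt x := by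
      rw [SepAux.swt_eq]
      apply Finset.sum_le_sum
      intro x _
      have := SepAux.vwt_nonneg W x
      split_ifs with hx
      · rw [hhA α x hx]; simp
      · exact mul_nonneg (Real.rpow_nonneg (hh0 α x) p) this
    have h4 : E * N α ≤ W.swt (A α) := by
      have h5 : N α / W.swt (A α) ≤ Real.exp (a * T) := by
        rw [← Real.log_le_iff_le_exp (div_pos (hNpos α) (hm α)), haT]
        linarith [hMle α]
      have h6 : E ≤ Real.exp (-(a * T)) := by
        rw [hE, ← Real.exp_mul]
        apply Real.exp_le_exp.2
        nlinarith [mul_nonneg ha.le hT0]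
      rw [div_le_iff₀ (hm α)] at h5
      calc E * N α ≤ Real.exp (-(a * T)) * (Real.exp (a * T) * W.swt (A α)) := by
            apply mul_le_mul h6 h5 (hNpos α).le (Real.exp_pos _).le
        _ = W.swt (A α) := by
            rw [← mul_assoc, ← Real.exp_add]; simp
    have hE0 : 0 ≤ E := by positivity
    have h7 : E * W.swt B ≤ ∑ x, h α x ^ p * W.vwt x :=
      (mul_le_mul_of_nonneg_left h2 hE0).trans (h4.trans h3)
    have hap : 0 ≤ a ^ p := by positivity
    calc _ ≤ _ := h1
      _ ≤ a ^ p * (∑ x, h α x ^ p * W.vwt x + ∑ x, h α x ^ p * W.vwt x) := by gcongr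
      _ = _ := by ring
  -- the edge estimate
  have hedge : ∀ (c : Fin (k + 1) → ℝ) x y, W.G.Adj x y →
      |∑ β, c β * h β y - ∑ β, c β * h β x| ^ p ≤
        (∑ α, |c α| ^ p * g α x ^ p + ∑ α, |c α| ^ p * g α y ^ p) / 2 := by
    intro c x y hxy
    have hsingle : ∀ α z, (|c α| * g α z) ^ p ≤ ∑ α, |c α| ^ p * g α z ^ p := by
      intro α z
      rw [Real.mul_rpow (abs_nonneg _) (hg0 α z)]
      exact Finset.single_le_sum (f := fun α => |c α| ^ p * g α z ^ p)
        (fun β _ => mul_nonneg (Real.rpow_nonneg (abs_nonneg _) p)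
          (Real.rpow_nonneg (hg0 β z) p)) (Finset.mem_univ α)
    suffices hs : ∃ α β, |∑ β, c β * h β y - ∑ β, c β * h β x| ≤
        (|c α| * g α x + |c β| * g β y) / 2 by
      obtain ⟨α, β, hs⟩ := hs
      have := SepAux.pow_mean hp (mul_nonneg (abs_nonneg (c α)) (hg0 α x))
        (mul_nonneg (abs_nonneg (c β)) (hg0 β y)) hs
      linarith [hsingle α x, hsingle β y]
    have hdist : W.G.dist x y = 1 := SimpleGraph.dist_eq_one_iff_adj.2 hxy
    have hdist' : W.G.dist y x = 1 := SimpleGraph.dist_eq_one_iff_adj.2 hxy.symm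
    have hsame : ∀ α, |c α * h α y - c α * h α x| ≤ (|c α| * g α x + |c α| * g α y) / 2 := by
      intro α
      rw [← mul_sub, abs_mul, abs_sub_comm]
      have l1 : δ α x ≤ δ α y + 1 := by
        have := SepAux.dd_lip W (hne α) x y; rwa [hdist] at this
      have l2 : δ α y ≤ δ α x + 1 := by
        have := SepAux.dd_lip W (hne α) y x; rwa [hdist'] at this
      have := mul_le_mul_of_nonneg_left (SepAux.hf_edge ha hR l1 l2) (abs_nonneg (c α))
      refine this.trans (le_of_eq ?_)
      simp only [hg]; ring
    by_cases hx : ∃ α, h α x ≠ 0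
    · obtain ⟨α, hα⟩ := hx
      rw [hsum c α x hα]
      by_cases hy : ∃ β, β ≠ α ∧ h β y ≠ 0
      · obtain ⟨β, hβα, hβ⟩ := hy
        rw [hsum c β y hβ]
        refine ⟨α, β, ?_⟩
        have s1 := hsupp α x hα
        have s2 := hsupp β y hβ
        have s3 := hsep α β hβα.symm x y
        rw [hdist] at s3
        have b1 : h α x ≤ g α x / 2 := SepAux.hf_half ha hR (by omega)
        have b2 : h β y ≤ g β y / 2 := SepAux.hf_half ha hR (by omega)
        have b3 := mul_le_mul_of_nonneg_left b1 (abs_nonneg (c α))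
        have b4 := mul_le_mul_of_nonneg_left b2 (abs_nonneg (c β))
        have b5 := abs_sub (c β * h β y) (c α * h α x)
        rw [abs_mul, abs_mul, abs_of_nonneg (hh0 α x), abs_of_nonneg (hh0 β y)] at b5
        linarith
      · push Not at hy
        refine ⟨α, α, ?_⟩
        rw [Finset.sum_eq_single_of_mem α (Finset.mem_univ _)
          (fun β _ hβ => by rw [hy β hβ, mul_zero])]
        exact hsame α
    · push Not at hx
      by_cases hy : ∃ β, h β y ≠ 0
      · obtain ⟨β, hβ⟩ := hy
        refine ⟨β, β, ?_⟩
        rw [hsum c β y hβ, Finset.sum_eq_zero (fun γ _ => by rw [hx γ, mul_zero])]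
        have := hsame β
        rwa [hx β, mul_zero] at this
      · push Not at hy
        refine ⟨0, 0, ?_⟩
        rw [Finset.sum_eq_zero (fun γ _ => by rw [hy γ, mul_zero]),
          Finset.sum_eq_zero (fun γ _ => by rw [hx γ, mul_zero])]
        have := hg0 0 x
        have := hg0 0 y
        simp only [sub_self, abs_zero]
        positivity
  -- energy estimate
  have henergy : ∀ (c : Fin (k + 1) → ℝ),
      W.energy p (fun x => ∑ β, c β * h β x) ≤
        ∑ α, |c α| ^ p * ∑ x, g α x ^ p * W.vwt x := by
    intro c
    set F : V → ℝ := fun x => ∑ α, |c α| ^ p * g α x ^ p with hF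
    have h1 : W.energy p (fun x => ∑ β, c β * h β x) ≤
        ∑ x, ∑ y, (F x + F y) / 2 * W.w x y := by
      unfold WeightedGraph.energy
      apply Finset.sum_le_sum; intro x _
      apply Finset.sum_le_sum; intro y _
      by_cases hw : 0 < W.w x y
      · exact mul_le_mul_of_nonneg_right (hedge c x y ((W.pos_iff_adj x y).1 hw)) hw.le
      · have : W.w x y = 0 := le_antisymm (not_lt.1 hw) (W.nonneg x y)
        simp [this]
    have h2 : ∑ x, ∑ y, F x * W.w x y = ∑ x, F x * W.vwt x := by
      apply Finset.sum_congr rfl; intro x _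
      rw [WeightedGraph.vwt, Finset.mul_sum]
    have h3 : ∑ x, ∑ y, F y * W.w x y = ∑ x, F x * W.vwt x := by
      rw [Finset.sum_comm, ← h2]
      apply Finset.sum_congr rfl; intro x _
      apply Finset.sum_congr rfl; intro y _
      rw [W.symm]
    have h4 : ∑ x, ∑ y, (F x + F y) / 2 * W.w x y = ∑ x, F x * W.vwt x := by
      have : ∑ x, ∑ y, (F x + F y) / 2 * W.w x y =
          (∑ x, ∑ y, F x * W.w x y + ∑ x, ∑ y, F y * W.w x y) / 2 := by
        simp only [← Finset.sum_add_distrib, Finset.sum_div]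
        apply Finset.sum_congr rfl; intro x _
        apply Finset.sum_congr rfl; intro y _
        ring
      rw [this, h2, h3]; ring
    rw [h4] at h1
    refine h1.trans (le_of_eq ?_)
    simp only [hF, Finset.sum_mul, Finset.mul_sum]
    rw [Finset.sum_comm]
    apply Finset.sum_congr rfl; intro x _
    apply Finset.sum_congr rfl; intro y _
    ring
  have hnorm : ∀ (c : Fin (k + 1) → ℝ),
      ∑ α, |c α| ^ p * ∑ x, h α x ^ p * W.vwt x ≤
        ∑ x, |∑ β, c β * h β x| ^ p * W.vwt x := by
    intro c
    simp only [Finset.mul_sum]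
    rw [Finset.sum_comm]
    apply Finset.sum_le_sum
    intro x _
    have hv := SepAux.vwt_nonneg W x
    by_cases hx : ∃ α, h α x ≠ 0
    · obtain ⟨α, hα⟩ := hx
      rw [hsum c α x hα, Finset.sum_eq_single_of_mem α (Finset.mem_univ _)]
      · rw [abs_mul, abs_of_nonneg (hh0 α x), Real.mul_rpow (abs_nonneg _) (hh0 α x), mul_assoc]
      · intro β _ hβ
        rw [hexcl α β x hβ.symm hα, Real.zero_rpow hp0.ne']; simp
    · push Not at hx
      rw [Finset.sum_eq_zero]
      · positivity
      · intro β _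
        rw [hx β, Real.zero_rpow hp0.ne']; simp
  -- the subspace
  have hli : LinearIndependent ℝ h := by
    rw [Fintype.linearIndependent_iff]
    intro c hc0 α
    obtain ⟨z, hz⟩ := hne α
    have h1 := congrFun hc0 z
    simp only [Finset.sum_apply, Pi.smul_apply, smul_eq_mul, Pi.zero_apply] at h1
    rw [hsum c α z (by rw [hhA α z hz]; norm_num), hhA α z hz] at h1
    simpa using h1
  have hquot0 : ∀ φ : V → ℝ, 0 ≤ W.energy p φ / (2 * ∑ x, |φ x| ^ p * W.vwt x) := by
    intro φ
    apply div_nonneg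
    · exact Finset.sum_nonneg fun x _ => Finset.sum_nonneg fun y _ =>
        mul_nonneg (Real.rpow_nonneg (abs_nonneg _) _) (W.nonneg x y)
    · exact mul_nonneg (by norm_num) (Finset.sum_nonneg fun x _ =>
        mul_nonneg (Real.rpow_nonneg (abs_nonneg _) _) (SepAux.vwt_nonneg W x))
  have hmem0 : ∀ s ∈ {s | ∃ L : Submodule ℝ (V → ℝ), Module.finrank ℝ L = k + 1 ∧
    s = sSup {r | ∃ φ ∈ L, φ ≠ 0 ∧
      r = W.energy p φ / (2 * ∑ x, |φ x| ^ p * W.vwt x)}}, 0 ≤ s := by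
    rintro s ⟨L, _, rfl⟩
    apply Real.sSup_nonneg
    rintro r ⟨φ, _, _, rfl⟩
    exact hquot0 φ
  have hnu0 : 0 ≤ W.nuHat k p := Real.sInf_nonneg hmem0
  have hap : 0 ≤ a ^ p := by positivity
  have hnu : W.nuHat k p ≤ a ^ p := by
    have hle : W.nuHat k p ≤ sSup {r | ∃ φ ∈ Submodule.span ℝ (Set.range h), φ ≠ 0 ∧
      r = W.energy p φ / (2 * ∑ x, |φ x| ^ p * W.vwt x)} := by
      apply csInf_le ⟨0, hmem0⟩
      refine ⟨_, ?_, rfl⟩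
      rw [finrank_span_eq_card hli]; simp
    refine hle.trans (Real.sSup_le ?_ hap)
    rintro r ⟨φ, hφ, _, rfl⟩
    obtain ⟨c, rfl⟩ := (Submodule.mem_span_range_iff_exists_fun ℝ).1 hφ
    have he : (∑ i, c i • h i) = fun x => ∑ β, c β * h β x := by
      ext x; simp
    rw [he]
    have hX : 0 ≤ ∑ x, |∑ β, c β * h β x| ^ p * W.vwt x := Finset.sum_nonneg fun x _ =>
        mul_nonneg (Real.rpow_nonneg (abs_nonneg _) _) (SepAux.vwt_nonneg W x)
    apply div_le_of_le_mul₀ (mul_nonneg (by norm_num) hX) hap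
    calc _ ≤ _ := henergy c
      _ ≤ ∑ α, |c α| ^ p * (2 * a ^ p * ∑ x, h α x ^ p * W.vwt x) := by
          apply Finset.sum_le_sum; intro α _
          exact mul_le_mul_of_nonneg_left (hone α) (Real.rpow_nonneg (abs_nonneg _) _)
      _ = 2 * a ^ p * ∑ α, |c α| ^ p * ∑ x, h α x ^ p * W.vwt x := by
          rw [Finset.mul_sum]
          apply Finset.sum_congr rfl; intro α _; ring
      _ ≤ 2 * a ^ p * ∑ x, |∑ β, c β * h β x| ^ p * W.vwt x :=
          mul_le_mul_of_nonneg_left (hnorm c) (by positivity)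
      _ = _ := by ring
  calc W.nuHat k p ^ (1 / p) ≤ (a ^ p) ^ (1 / p) :=
        Real.rpow_le_rpow hnu0 hnu (by positivity)
    _ = a := by rw [one_div, Real.rpow_rpow_inv ha.le hp0.ne']
end
end

section
/- Let (G, μ) be a weighted graph, let p ∈ [1, ∞), and let k be an integer with 1 ≤ k ≤ #V − 1. Let A_0, A_1, …, A_k be nonempty pairwise disjoint subsets of V, and set D := min_{α ≠ β} d(A_α, A_β), where d is the graph distance. Then ν_{k,p}(G, μ)^{1/p} ≤ (2 / D) · max_{α = 0, …, k} log( e · (μ(V) − ∑_{β ≠ α} μ(A_β)) / μ(A_α) ). -/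
open scoped BigOperators Classical

noncomputable section

namespace NuAux

/-- The profile function. -/
def g (t : ℝ) : ℝ := if t ≤ 0 then 0 else if t ≤ 1 then t else Real.exp (t - 1)

/-- The slope bound of the profile function. -/
def gg (t : ℝ) : ℝ := if t < 0 then 0 else if t ≤ 1 then 1 else Real.exp (t - 1)

lemma g_nonneg (t : ℝ) : 0 ≤ g t := by
  unfold g; split_ifs <;> first | positivity | linarith

lemma gg_nonneg (t : ℝ) : 0 ≤ gg t := by
  unfold gg; split_ifs <;> positivity

lemma g_of_nonpos {t : ℝ} (h : t ≤ 0) : g t = 0 := by simp [g, h]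

lemma g_of_one_le {t : ℝ} (h : 1 ≤ t) : g t = Real.exp (t - 1) := by
  unfold g
  rcases h.eq_or_lt with rfl | h
  · norm_num
  · rw [if_neg (by linarith), if_neg (by linarith)]

lemma gg_of_one_le {t : ℝ} (h : 1 ≤ t) : gg t = Real.exp (t - 1) := by
  unfold gg
  rcases h.eq_or_lt with rfl | h
  · norm_num
  · rw [if_neg (by linarith), if_neg (by linarith)]

lemma trap {x : ℝ} (hx : 0 ≤ x) : Real.exp x - 1 ≤ x * (Real.exp x + 1) / 2 := by
  have hm : MonotoneOn (fun x : ℝ => (x - 2) * Real.exp x + x) (Set.Ici 0) := by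
    have hd : ∀ x : ℝ, HasDerivAt (fun x : ℝ => (x - 2) * Real.exp x + x)
        (1 * Real.exp x + (x - 2) * Real.exp x + 1) x := fun x =>
      ((((hasDerivAt_id x).sub_const 2).mul (Real.hasDerivAt_exp x)).add (hasDerivAt_id x))
    apply monotoneOn_of_deriv_nonneg (convex_Ici 0)
    · exact fun x _ => (hd x).continuousAt.continuousWithinAt
    · exact fun x _ => (hd x).differentiableAt.differentiableWithinAt
    · intro x _
      rw [(hd x).deriv]
      have h1 := Real.add_one_le_exp (-x)
      have h2 : Real.exp (-x) * Real.exp x = 1 := by rw [← Real.exp_add]; simp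
      nlinarith [Real.exp_pos x]
  have := hm (Set.mem_Ici.2 le_rfl) (Set.mem_Ici.2 hx) hx
  simp at this
  linarith

lemma g_le (t : ℝ) (ht : 0 ≤ t) : g t ≤ t * gg t := by
  unfold g gg
  split_ifs <;> try linarith
  have := Real.exp_pos (t - 1)
  nlinarith

lemma key {t t' κ : ℝ} (h0 : 0 ≤ t') (h1 : t' ≤ t) (h2 : t ≤ t' + κ) :
    |g t - g t'| ≤ κ / 2 * (gg t + gg t') := by
  have gt : ∀ t, 0 ≤ t → t ≤ 1 → g t = t ∧ gg t = 1 := by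
    intro t h h'
    refine ⟨?_, by simp [gg, h', not_lt.2 h]⟩
    unfold g
    split_ifs <;> linarith
  suffices h : 0 ≤ g t - g t' ∧ g t - g t' ≤ (t - t') / 2 * (gg t + gg t') by
    rw [abs_of_nonneg h.1]
    refine h.2.trans ?_
    have := gg_nonneg t
    have := gg_nonneg t'
    gcongr; linarith
  rcases le_total t 1 with ht | ht
  · rw [(gt t (h0.trans h1) ht).1, (gt t (h0.trans h1) ht).2, (gt t' h0 (h1.trans ht)).1,
      (gt t' h0 (h1.trans ht)).2]
    constructor <;> linarith
  · rw [g_of_one_le ht, gg_of_one_le ht]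
    rcases le_total t' 1 with ht' | ht'
    · rw [(gt t' h0 ht').1, (gt t' h0 ht').2]
      have h3 := trap (sub_nonneg.2 ht)
      have h4 : 1 ≤ Real.exp (t - 1) := Real.one_le_exp (by linarith)
      constructor <;> nlinarith
    · rw [g_of_one_le ht', gg_of_one_le ht']
      have h3 := trap (sub_nonneg.2 h1)
      have h4 : Real.exp (t - 1) = Real.exp (t - t') * Real.exp (t' - 1) := by
        rw [← Real.exp_add]; ring_nf
      have h5 := Real.exp_pos (t' - 1)
      have h6 : 1 ≤ Real.exp (t - t') := Real.one_le_exp (by linarith)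
      rw [h4]
      constructor <;> nlinarith

lemma gg_rpow_le {t p : ℝ} (hp : 1 ≤ p) : gg t ^ p ≤ 1 + g t ^ p := by
  have := Real.rpow_nonneg (g_nonneg t) p
  rcases le_total 1 t with h | h
  · rw [g_of_one_le h, gg_of_one_le h]; linarith
  · have : gg t ≤ 1 := by unfold gg; split_ifs <;> linarith
    have := Real.rpow_le_one (gg_nonneg t) this (by linarith : 0 ≤ p)
    linarith

lemma gg_rpow_of_neg {t p : ℝ} (hp : 1 ≤ p) (h : t < 0) : gg t ^ p = 0 := by
  simp [gg, h]; rw [Real.zero_rpow]; linarith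

variable {V : Type*} [Fintype V]

/-- Distance from a vertex to a set. -/
def dA (W : WeightedGraph V) (A : Set V) (x : V) : ℕ :=
  sInf {n : ℕ | ∃ a ∈ A, W.G.dist x a = n}

lemma dA_spec (W : WeightedGraph V) {A : Set V} (hA : A.Nonempty) (x : V) :
    ∃ a ∈ A, W.G.dist x a = dA W A x := by
  obtain ⟨a, ha⟩ := hA
  exact Nat.sInf_mem (s := {n : ℕ | ∃ a ∈ A, W.G.dist x a = n}) ⟨_, a, ha, rfl⟩

lemma dA_le (W : WeightedGraph V) {A : Set V} {a : V} (ha : a ∈ A) (x : V) :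
    dA W A x ≤ W.G.dist x a := Nat.sInf_le ⟨a, ha, rfl⟩

lemma dA_mem (W : WeightedGraph V) {A : Set V} {a : V} (ha : a ∈ A) : dA W A a = 0 := by
  have := dA_le W ha a
  simpa using this

lemma dA_adj (W : WeightedGraph V) {A : Set V} (hA : A.Nonempty) {x y : V} (h : W.G.Adj x y) :
    dA W A x ≤ dA W A y + 1 := by
  obtain ⟨a, ha, h1⟩ := dA_spec W hA y
  have h2 := dA_le W ha x
  have h3 := W.connected.dist_triangle (u := x) (v := y) (w := a)
  have h4 : W.G.dist x y = 1 := SimpleGraph.dist_eq_one_iff_adj.2 h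
  omega

lemma setDist_le (W : WeightedGraph V) {A B : Set V} (hA : A.Nonempty) (hB : B.Nonempty) (x : V) :
    W.setDist A B ≤ dA W A x + dA W B x := by
  obtain ⟨a, ha, h1⟩ := dA_spec W hA x
  obtain ⟨b, hb, h2⟩ := dA_spec W hB x
  have h3 := W.connected.dist_triangle (u := a) (v := x) (w := b)
  have h4 : W.setDist A B ≤ W.G.dist a b := Nat.sInf_le ⟨a, ha, b, hb, rfl⟩
  rw [W.G.dist_comm (u := a) (v := x)] at h3
  omega

lemma setDist_pos (W : WeightedGraph V) {A B : Set V} (hA : A.Nonempty) (hB : B.Nonempty)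
    (h : Disjoint A B) : 1 ≤ W.setDist A B := by
  obtain ⟨a, ha⟩ := hA
  obtain ⟨b, hb⟩ := hB
  obtain ⟨a, ha, b, hb, h1⟩ := Nat.sInf_mem
    (s := {n : ℕ | ∃ a ∈ A, ∃ b ∈ B, W.G.dist a b = n}) ⟨_, a, ha, b, hb, rfl⟩
  have h2 : a ≠ b := fun e => Set.disjoint_left.1 h ha (e ▸ hb)
  have := W.connected.pos_dist_of_ne h2
  unfold WeightedGraph.setDist
  omega

lemma vwt_nonneg (W : WeightedGraph V) (x : V) : 0 ≤ W.vwt x :=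
  Finset.sum_nonneg fun y _ => W.nonneg x y

lemma vwt_pos (W : WeightedGraph V) (h : 2 ≤ Fintype.card V) (x : V) : 0 < W.vwt x := by
  have : Nontrivial V := Fintype.one_lt_card_iff_nontrivial.1 h
  obtain ⟨y, hy⟩ := W.connected.preconnected.exists_adj_of_nontrivial x
  exact Finset.sum_pos' (fun y _ => W.nonneg x y) ⟨y, Finset.mem_univ _, (W.pos_iff_adj x y).2 hy⟩

/-- The edgewise bound. -/
lemma edge (W : WeightedGraph V) {k : ℕ} (A : Fin (k + 1) → Set V) (hne : ∀ α, (A α).Nonempty)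
    (D : ℕ) (hD : ∀ α β, α ≠ β → D ≤ W.setDist (A α) (A β)) {κ : ℝ} (hκ : 0 < κ)
    (a : Fin (k + 1) → ℝ) {x y : V} (hxy : W.G.Adj x y) :
    ∃ α β, |∑ γ, a γ * g (κ * (D / 2 - dA W (A γ) y)) - ∑ γ, a γ * g (κ * (D / 2 - dA W (A γ) x))|
      ≤ κ / 2 * (|a α| * gg (κ * (D / 2 - dA W (A α) x)) +
        |a β| * gg (κ * (D / 2 - dA W (A β) y))) := by
  have hz : ∀ γ z, ¬ (2 * dA W (A γ) z < D) → g (κ * (D / 2 - dA W (A γ) z)) = 0 := by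
    intro γ z h
    apply g_of_nonpos
    have : (D : ℝ) ≤ 2 * dA W (A γ) z := by exact_mod_cast not_lt.1 h
    nlinarith
  have hpos : ∀ γ z, 2 * dA W (A γ) z ≤ D → 0 ≤ κ * (D / 2 - dA W (A γ) z) := by
    intro γ z h
    have : 2 * (dA W (A γ) z : ℝ) ≤ D := by exact_mod_cast h
    apply mul_nonneg hκ.le; linarith
  have hhalf : ∀ γ z, 2 * dA W (A γ) z + 1 = D → g (κ * (D / 2 - dA W (A γ) z)) ≤
      κ / 2 * gg (κ * (D / 2 - dA W (A γ) z)) := by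
    intro γ z h
    have h' : (D : ℝ) = 2 * dA W (A γ) z + 1 := by exact_mod_cast h.symm
    have h2 := g_le (κ * (D / 2 - dA W (A γ) z)) (hpos γ z (by omega))
    convert h2 using 2
    rw [h']; ring
  have hsep : ∀ α β, α ≠ β → ∀ z, D ≤ dA W (A α) z + dA W (A β) z := fun α β h z =>
    (hD α β h).trans (setDist_le W (hne α) (hne β) z)
  have hone : ∀ α z, (∀ γ, γ ≠ α → ¬ (2 * dA W (A γ) z < D)) →
      ∑ γ, a γ * g (κ * (D / 2 - dA W (A γ) z)) = a α * g (κ * (D / 2 - dA W (A α) z)) := by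
    intro α z h
    apply Finset.sum_eq_single α
    · intro γ _ hγ; rw [hz γ z (h γ hγ), mul_zero]
    · simp
  have hlip : ∀ γ, dA W (A γ) x ≤ dA W (A γ) y + 1 := fun γ => dA_adj W (hne γ) hxy
  have hlip' : ∀ γ, dA W (A γ) y ≤ dA W (A γ) x + 1 := fun γ => dA_adj W (hne γ) hxy.symm
  -- the one-function estimate
  have hord : ∀ α u v, dA W (A α) u ≤ dA W (A α) v → dA W (A α) v ≤ dA W (A α) u + 1 →
      |g (κ * (D / 2 - dA W (A α) u)) - g (κ * (D / 2 - dA W (A α) v))| ≤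
      κ / 2 * (gg (κ * (D / 2 - dA W (A α) u)) + gg (κ * (D / 2 - dA W (A α) v))) := by
    intro α u v h1 h2
    by_cases h3 : 2 * dA W (A α) v ≤ D
    · have h1' : (dA W (A α) u : ℝ) ≤ dA W (A α) v := by exact_mod_cast h1
      have h2' : (dA W (A α) v : ℝ) ≤ dA W (A α) u + 1 := by exact_mod_cast h2
      apply key (hpos α v h3)
      · gcongr
      · nlinarith
    · rw [hz α v (by omega), sub_zero, abs_of_nonneg (g_nonneg _)]
      have := gg_nonneg (κ * (D / 2 - dA W (A α) u))
      have := gg_nonneg (κ * (D / 2 - dA W (A α) v))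
      by_cases h4 : 2 * dA W (A α) u < D
      · refine (hhalf α u (by omega)).trans ?_
        gcongr; linarith
      · rw [hz α u h4]; positivity
  have hsingle : ∀ α, |g (κ * (D / 2 - dA W (A α) y)) - g (κ * (D / 2 - dA W (A α) x))| ≤
      κ / 2 * (gg (κ * (D / 2 - dA W (A α) x)) + gg (κ * (D / 2 - dA W (A α) y))) := by
    intro α
    rcases le_total (dA W (A α) x) (dA W (A α) y) with h | h
    · rw [abs_sub_comm]; exact hord α x y h (hlip' α)
    · rw [add_comm (gg _)]; exact hord α y x h (hlip α)
  have caseA : ∀ α, (∀ γ, γ ≠ α → ¬ (2 * dA W (A γ) x < D)) →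
      (∀ γ, γ ≠ α → ¬ (2 * dA W (A γ) y < D)) →
      |∑ γ, a γ * g (κ * (D / 2 - dA W (A γ) y)) - ∑ γ, a γ * g (κ * (D / 2 - dA W (A γ) x))|
      ≤ κ / 2 * (|a α| * gg (κ * (D / 2 - dA W (A α) x)) +
        |a α| * gg (κ * (D / 2 - dA W (A α) y))) := by
    intro α hx hy
    rw [hone α x hx, hone α y hy, ← mul_sub, abs_mul, ← mul_add]
    have := mul_le_mul_of_nonneg_left (hsingle α) (abs_nonneg (a α))
    linarith
  have hother : ∀ α z, 2 * dA W (A α) z < D → ∀ γ, γ ≠ α → ¬ (2 * dA W (A γ) z < D) := by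
    intro α z h γ hγ
    have := hsep γ α hγ z
    omega
  by_cases hx : ∃ α, 2 * dA W (A α) x < D
  · obtain ⟨α, hα⟩ := hx
    by_cases hy : ∃ β, 2 * dA W (A β) y < D
    · obtain ⟨β, hβ⟩ := hy
      refine ⟨α, β, ?_⟩
      by_cases hab : α = β
      · subst hab
        exact caseA α (hother α x hα) (hother α y hβ)
      · rw [hone α x (hother α x hα), hone β y (hother β y hβ)]
        have h1 := hsep α β hab x
        have h2 := hsep α β hab y
        have h3 := hlip α
        have h4 := hlip' α
        have h5 := hlip β
        have h6 := hlip' β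
        have e1 := hhalf α x (by omega)
        have e2 := hhalf β y (by omega)
        refine (abs_sub _ _).trans ?_
        rw [abs_mul, abs_mul, abs_of_nonneg (g_nonneg _), abs_of_nonneg (g_nonneg _)]
        have := mul_le_mul_of_nonneg_left e1 (abs_nonneg (a α))
        have := mul_le_mul_of_nonneg_left e2 (abs_nonneg (a β))
        linarith
    · push Not at hy
      exact ⟨α, α, caseA α (hother α x hα) fun γ _ => not_lt.2 (hy γ)⟩
  · push Not at hx
    by_cases hy : ∃ β, 2 * dA W (A β) y < D
    · obtain ⟨β, hβ⟩ := hy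
      exact ⟨β, β, caseA β (fun γ _ => not_lt.2 (hx γ)) (hother β y hβ)⟩
    · push Not at hy
      exact ⟨0, 0, caseA 0 (fun γ _ => not_lt.2 (hx γ)) (fun γ _ => not_lt.2 (hy γ))⟩

/-- The `p`-th power of the edgewise bound. -/
lemma edge_p (W : WeightedGraph V) {k : ℕ} (A : Fin (k + 1) → Set V) (hne : ∀ α, (A α).Nonempty)
    (D : ℕ) (hD : ∀ α β, α ≠ β → D ≤ W.setDist (A α) (A β)) {κ : ℝ} (hκ : 0 < κ)
    {p : ℝ} (hp : 1 ≤ p)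
    (a : Fin (k + 1) → ℝ) {x y : V} (hxy : W.G.Adj x y) :
    |∑ γ, a γ * g (κ * (D / 2 - dA W (A γ) y)) - ∑ γ, a γ * g (κ * (D / 2 - dA W (A γ) x))| ^ p
      ≤ κ ^ p / 2 * (∑ γ, |a γ| ^ p * gg (κ * (D / 2 - dA W (A γ) x)) ^ p +
        ∑ γ, |a γ| ^ p * gg (κ * (D / 2 - dA W (A γ) y)) ^ p) := by
  obtain ⟨α, β, h⟩ := edge W A hne D hD hκ a hxy
  have hG := fun γ z => gg_nonneg (κ * (D / 2 - dA W (A γ) z))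
  have hs : ∀ γ z, (|a γ| * gg (κ * (D / 2 - dA W (A γ) z))) ^ p ≤
      ∑ γ, |a γ| ^ p * gg (κ * (D / 2 - dA W (A γ) z)) ^ p := by
    intro γ z
    rw [Real.mul_rpow (abs_nonneg _) (hG γ z)]
    exact Finset.single_le_sum (f := fun γ => |a γ| ^ p * gg (κ * (D / 2 - dA W (A γ) z)) ^ p)
      (fun γ _ => mul_nonneg (Real.rpow_nonneg (abs_nonneg _) _) (Real.rpow_nonneg (hG γ z) _))
      (Finset.mem_univ γ)
  have hX := mul_nonneg (abs_nonneg (a α)) (hG α x)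
  have hY := mul_nonneg (abs_nonneg (a β)) (hG β y)
  have hsx := hs α x
  have hsy := hs β y
  generalize |a α| * gg (κ * (D / 2 - dA W (A α) x)) = X at *
  generalize |a β| * gg (κ * (D / 2 - dA W (A β) y)) = Y at *
  calc _ ≤ (κ / 2 * (X + Y)) ^ p := Real.rpow_le_rpow (abs_nonneg _) h (by linarith)
    _ = κ ^ p * (1 / 2 * X + 1 / 2 * Y) ^ p := by
      rw [← Real.mul_rpow hκ.le (by positivity)]; ring_nf
    _ ≤ κ ^ p * (1 / 2 * X ^ p + 1 / 2 * Y ^ p) := by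
      gcongr
      exact (convexOn_rpow hp).2 hX hY (by norm_num : (0 : ℝ) ≤ 1 / 2)
        (by norm_num : (0 : ℝ) ≤ 1 / 2) (by norm_num)
    _ = κ ^ p / 2 * (X ^ p + Y ^ p) := by ring
    _ ≤ _ := by gcongr

lemma energy_le (W : WeightedGraph V) {k : ℕ} (A : Fin (k + 1) → Set V)
    (hne : ∀ α, (A α).Nonempty)
    (D : ℕ) (hD : ∀ α β, α ≠ β → D ≤ W.setDist (A α) (A β)) {κ : ℝ} (hκ : 0 < κ)
    {p : ℝ} (hp : 1 ≤ p) (a : Fin (k + 1) → ℝ) :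
    W.energy p (fun x => ∑ γ, a γ * g (κ * (D / 2 - dA W (A γ) x))) ≤
      κ ^ p * ∑ γ, |a γ| ^ p * ∑ x, gg (κ * (D / 2 - dA W (A γ) x)) ^ p * W.vwt x := by
  set H : V → ℝ := fun x => ∑ γ, |a γ| ^ p * gg (κ * (D / 2 - dA W (A γ) x)) ^ p with hH
  have h1 : ∑ γ, |a γ| ^ p * ∑ x, gg (κ * (D / 2 - dA W (A γ) x)) ^ p * W.vwt x =
      ∑ x, H x * W.vwt x := by
    simp only [hH, Finset.mul_sum, Finset.sum_mul]
    rw [Finset.sum_comm]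
    simp only [mul_assoc]
  have h2 : ∑ x, H x * W.vwt x = ∑ x, ∑ y, H x * W.w x y := by
    simp only [WeightedGraph.vwt, Finset.mul_sum]
  have h3 : ∑ x, H x * W.vwt x = ∑ x, ∑ y, H y * W.w x y := by
    rw [h2, Finset.sum_comm]
    simp only [W.symm]
  have h4 : κ ^ p * ∑ x, H x * W.vwt x =
      ∑ x, ∑ y, κ ^ p / 2 * (H x + H y) * W.w x y := by
    have : ∑ x, ∑ y, κ ^ p / 2 * (H x + H y) * W.w x y =
      κ ^ p / 2 * (∑ x, ∑ y, H x * W.w x y + ∑ x, ∑ y, H y * W.w x y) := by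
      simp only [← Finset.sum_add_distrib, Finset.mul_sum]
      refine Finset.sum_congr rfl fun x _ => Finset.sum_congr rfl fun y _ => by ring
    rw [this, ← h2, ← h3]; ring
  rw [h1, h4]
  unfold WeightedGraph.energy
  refine Finset.sum_le_sum fun x _ => Finset.sum_le_sum fun y _ => ?_
  rcases (W.nonneg x y).eq_or_lt with h | h
  · simp [← h]
  · exact mul_le_mul_of_nonneg_right
      (edge_p W A hne D hD hκ hp a ((W.pos_iff_adj x y).1 h)) h.le

/-- Disjoint supports: the `p`-norm splits. -/
lemma norm_eq (W : WeightedGraph V) {k : ℕ} (A : Fin (k + 1) → Set V)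
    (hne : ∀ α, (A α).Nonempty)
    (D : ℕ) (hD : ∀ α β, α ≠ β → D ≤ W.setDist (A α) (A β)) {κ : ℝ} (hκ : 0 < κ)
    {p : ℝ} (hp : 1 ≤ p) (a : Fin (k + 1) → ℝ) :
    ∑ γ, |a γ| ^ p * ∑ x, g (κ * (D / 2 - dA W (A γ) x)) ^ p * W.vwt x ≤
    ∑ x, |∑ γ, a γ * g (κ * (D / 2 - dA W (A γ) x))| ^ p * W.vwt x := by
  have hp0 : p ≠ 0 := by linarith
  simp only [Finset.mul_sum]
  rw [Finset.sum_comm]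
  refine Finset.sum_le_sum fun x _ => ?_
  simp only [← mul_assoc]
  rw [← Finset.sum_mul]
  refine mul_le_mul_of_nonneg_right ?_ (vwt_nonneg W x)
  have hz : ∀ γ, ¬ (2 * dA W (A γ) x < D) → g (κ * (D / 2 - dA W (A γ) x)) = 0 := by
    intro γ h
    apply g_of_nonpos
    have : (D : ℝ) ≤ 2 * dA W (A γ) x := by exact_mod_cast not_lt.1 h
    nlinarith
  by_cases hx : ∃ α, 2 * dA W (A α) x < D
  · obtain ⟨α, hα⟩ := hx
    have h0 : ∀ γ, γ ≠ α → g (κ * (D / 2 - dA W (A γ) x)) = 0 := by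
      intro γ hγ
      apply hz
      have := (hD γ α hγ).trans (setDist_le W (hne γ) (hne α) x)
      omega
    rw [Finset.sum_eq_single α, Finset.sum_eq_single α, abs_mul, abs_of_nonneg (g_nonneg _),
      Real.mul_rpow (abs_nonneg _) (g_nonneg _)]
    · intro γ _ hγ; rw [h0 γ hγ, mul_zero]
    · simp
    · intro γ _ hγ; rw [h0 γ hγ, Real.zero_rpow hp0, mul_zero]
    · simp
  · push Not at hx
    have h0 : ∀ γ, g (κ * (D / 2 - dA W (A γ) x)) = 0 := fun γ => hz γ (not_lt.2 (hx γ))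
    simp [h0, Real.zero_rpow hp0]

lemma swt_eq (W : WeightedGraph V) (A : Set V) :
    W.swt A = ∑ x, (if x ∈ A then 1 else 0) * W.vwt x := by
  simp [WeightedGraph.swt, Finset.sum_filter]

/-- The radial estimate for a single function. -/
lemma single (W : WeightedGraph V) {k : ℕ} (A : Fin (k + 1) → Set V)
    (hne : ∀ α, (A α).Nonempty) (hdisj : ∀ α β, α ≠ β → Disjoint (A α) (A β))
    (D : ℕ) (hD1 : 1 ≤ D) (hD : ∀ α β, α ≠ β → D ≤ W.setDist (A α) (A β)) {κ : ℝ} (hκ : 0 < κ)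
    {p : ℝ} (hp : 1 ≤ p) (α : Fin (k + 1)) (hS : 1 ≤ κ * (D / 2))
    (hM : W.swt Set.univ - ∑ β ∈ Finset.univ.erase α, W.swt (A β) ≤
      Real.exp (κ * (D / 2) - 1) * W.swt (A α)) :
    ∑ x, gg (κ * (D / 2 - dA W (A α) x)) ^ p * W.vwt x ≤
      2 * ∑ x, g (κ * (D / 2 - dA W (A α) x)) ^ p * W.vwt x := by
  set E := Real.exp (κ * (D / 2) - 1) with hE
  have hE1 : 1 ≤ E := Real.one_le_exp (by linarith)
  have hEp : E ≤ E ^ p := by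
    simpa using Real.rpow_le_rpow_of_exponent_le hE1 hp
  have hgA : ∀ x ∈ A α, g (κ * (D / 2 - dA W (A α) x)) = E ∧
      gg (κ * (D / 2 - dA W (A α) x)) = E := by
    intro x hx
    rw [dA_mem W hx]
    simp only [Nat.cast_zero, sub_zero]
    exact ⟨g_of_one_le hS, gg_of_one_le hS⟩
  have hswt : 0 ≤ W.swt (A α) := Finset.sum_nonneg fun x _ => vwt_nonneg W x
  -- the function on the right dominates its part on `A α`
  have h1 : E * W.swt (A α) ≤ ∑ x, g (κ * (D / 2 - dA W (A α) x)) ^ p * W.vwt x := by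
    rw [swt_eq, Finset.mul_sum]
    refine Finset.sum_le_sum fun x _ => ?_
    rw [← mul_assoc]
    refine mul_le_mul_of_nonneg_right ?_ (vwt_nonneg W x)
    by_cases hx : x ∈ A α
    · rw [(hgA x hx).1]; simpa [hx] using hEp
    · simpa [hx] using Real.rpow_nonneg (g_nonneg _) p
  have h2 : ∑ x, gg (κ * (D / 2 - dA W (A α) x)) ^ p * W.vwt x ≤
      ∑ x, g (κ * (D / 2 - dA W (A α) x)) ^ p * W.vwt x +
      (W.swt Set.univ - ∑ β, W.swt (A β)) := by
    simp only [swt_eq]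
    rw [Finset.sum_comm, ← Finset.sum_sub_distrib, ← Finset.sum_add_distrib]
    refine Finset.sum_le_sum fun x _ => ?_
    rw [← Finset.sum_mul, ← sub_mul, ← add_mul]
    refine mul_le_mul_of_nonneg_right ?_ (vwt_nonneg W x)
    simp only [Set.mem_univ, if_true]
    have hle1 : ∑ β, (if x ∈ A β then (1 : ℝ) else 0) ≤ 1 := by
      by_cases h : ∃ β, x ∈ A β
      · obtain ⟨β, hβ⟩ := h
        rw [Finset.sum_eq_single β]
        · simp [hβ]
        · intro γ _ hγ
          rw [if_neg (fun h => Set.disjoint_left.1 (hdisj γ β hγ) h hβ)]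
        · simp
      · push Not at h
        simp [h]
    by_cases hx : x ∈ A α
    · rw [(hgA x hx).1, (hgA x hx).2]; linarith
    · by_cases hd : 2 * dA W (A α) x ≤ D
      · have h0 : ∀ β, x ∉ A β := by
          intro β hβ
          have hab : α ≠ β := fun e => hx (e ▸ hβ)
          have h5 := (hD α β hab).trans (setDist_le W (hne α) (hne β) x)
          rw [dA_mem W hβ] at h5
          omega
        simp only [h0, if_false, Finset.sum_const_zero]
        have := gg_rpow_le (t := κ * (D / 2 - dA W (A α) x)) hp
        linarith
      · have : (D : ℝ) < 2 * dA W (A α) x := by exact_mod_cast not_le.1 hd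
        rw [gg_rpow_of_neg hp (by nlinarith)]
        have := Real.rpow_nonneg (g_nonneg (κ * (D / 2 - dA W (A α) x))) p
        linarith
  have h3 : ∑ β, W.swt (A β) = W.swt (A α) + ∑ β ∈ Finset.univ.erase α, W.swt (A β) :=
    (Finset.add_sum_erase _ _ (Finset.mem_univ α)).symm
  linarith

lemma nu_le (W : WeightedGraph V) {k : ℕ} (hk : 1 ≤ k) (hcard : 2 ≤ Fintype.card V)
    (A : Fin (k + 1) → Set V)
    (hne : ∀ α, (A α).Nonempty) (hdisj : ∀ α β, α ≠ β → Disjoint (A α) (A β))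
    (D : ℕ) (hD1 : 1 ≤ D) (hD : ∀ α β, α ≠ β → D ≤ W.setDist (A α) (A β)) {κ : ℝ} (hκ : 0 < κ)
    {p : ℝ} (hp : 1 ≤ p) (hS : 1 ≤ κ * (D / 2))
    (hM : ∀ α, W.swt Set.univ - ∑ β ∈ Finset.univ.erase α, W.swt (A β) ≤
      Real.exp (κ * (D / 2) - 1) * W.swt (A α)) :
    W.nu k p ≤ κ ^ p := by
  have hw := vwt_pos W hcard
  have : Nonempty V := ⟨(hne 0).some⟩
  have hV : 0 < W.swt Set.univ := by
    rw [swt_eq]; simp only [Set.mem_univ, if_true, one_mul]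
    exact Finset.sum_pos (fun x _ => hw x) Finset.univ_nonempty
  let f : Fin (k + 1) → V → ℝ := fun γ x => g (κ * (D / 2 - dA W (A γ) x))
  let T : (Fin (k + 1) → ℝ) →ₗ[ℝ] (V → ℝ) := Fintype.linearCombination ℝ f
  have hT : ∀ a, T a = fun x => ∑ γ, a γ * g (κ * (D / 2 - dA W (A γ) x)) := by
    intro a; ext x
    simp [T, f, Fintype.linearCombination_apply]
  have hTA : ∀ a α x, x ∈ A α → T a x = a α * Real.exp (κ * (D / 2) - 1) := by
    intro a α x hx
    rw [hT]
    simp only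
    rw [Finset.sum_eq_single α]
    · rw [dA_mem W hx, Nat.cast_zero, sub_zero, g_of_one_le hS]
    · intro γ _ hγ
      have h5 := (hD γ α hγ).trans (setDist_le W (hne γ) (hne α) x)
      rw [dA_mem W hx] at h5
      have h6 : (D : ℝ) ≤ dA W (A γ) x := by exact_mod_cast h5
      rw [g_of_nonpos, mul_zero]
      have : (0 : ℝ) ≤ D := by positivity
      nlinarith
    · simp
  have hinj : Function.Injective T := by
    rw [← LinearMap.ker_eq_bot, LinearMap.ker_eq_bot']
    intro a ha
    ext α
    obtain ⟨x, hx⟩ := hne α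
    have := hTA a α x hx
    rw [ha] at this
    simpa [(Real.exp_pos _).ne'] using this.symm
  let m : (V → ℝ) →ₗ[ℝ] ℝ := Fintype.linearCombination ℝ W.vwt
  have hm : ∀ φ, m φ = ∑ x, φ x * W.vwt x := by
    intro φ; simp [m, Fintype.linearCombination_apply]
  let ℓ : Module.Dual ℝ (Fin (k + 1) → ℝ) := m ∘ₗ T
  have hℓ : ℓ ≠ 0 := by
    intro h
    have h1 : m (T (fun _ => 1)) = 0 := by
      have := congrArg (fun l => l (fun _ => (1 : ℝ))) h
      simpa [ℓ] using this
    rw [hm] at h1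
    obtain ⟨x, hx⟩ := hne 0
    have h2 : 0 < ∑ x, T (fun _ => 1) x * W.vwt x := by
      apply Finset.sum_pos'
      · intro y _
        refine mul_nonneg ?_ (hw y).le
        rw [hT]
        exact Finset.sum_nonneg fun γ _ => mul_nonneg zero_le_one (g_nonneg _)
      · refine ⟨x, Finset.mem_univ _, mul_pos ?_ (hw x)⟩
        rw [hTA _ 0 x hx, one_mul]
        exact Real.exp_pos _
    linarith
  have hker : Module.finrank ℝ (LinearMap.ker ℓ) = k := by
    have := Module.Dual.finrank_ker_add_one_of_ne_zero hℓ
    simp at this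
    exact this
  have hbdd : BddBelow {s | ∃ L : Submodule ℝ (V → ℝ), Module.finrank ℝ L = k ∧
      (∀ φ ∈ L, (∃ c : ℝ, ∀ x, φ x = c) → φ = 0) ∧
      s = sSup {r | ∃ φ ∈ L, φ ≠ 0 ∧
        r = W.energy p φ / (2 * ∑ x, |φ x - W.mean φ| ^ p * W.vwt x)}} := by
    refine ⟨0, ?_⟩
    rintro s ⟨L, -, -, rfl⟩
    apply Real.sSup_nonneg
    rintro r ⟨φ, -, -, rfl⟩
    apply div_nonneg
    · exact Finset.sum_nonneg fun x _ => Finset.sum_nonneg fun y _ =>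
        mul_nonneg (Real.rpow_nonneg (abs_nonneg _) _) (W.nonneg x y)
    · exact mul_nonneg zero_le_two (Finset.sum_nonneg fun x _ =>
        mul_nonneg (Real.rpow_nonneg (abs_nonneg _) _) (hw x).le)
  refine (csInf_le hbdd ⟨(LinearMap.ker ℓ).map T, ?_, ?_, rfl⟩).trans ?_
  · rw [← (Submodule.equivMapOfInjective T hinj (LinearMap.ker ℓ)).finrank_eq, hker]
  · rintro φ ⟨a, ha, rfl⟩ ⟨c, hc⟩
    have h1 : m (T a) = 0 := ha
    rw [hm] at h1
    simp only [hc] at h1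
    rw [← Finset.mul_sum] at h1
    have h2 : 0 < ∑ x, W.vwt x := Finset.sum_pos (fun x _ => hw x) Finset.univ_nonempty
    have h3 : c = 0 := by
      rcases mul_eq_zero.1 h1 with h | h
      · exact h
      · linarith
    ext x
    rw [hc, h3]; rfl
  · apply Real.sSup_le
    · rintro r ⟨φ, ⟨a, ha, rfl⟩, -, rfl⟩
      have h1 : m (T a) = 0 := ha
      rw [hm] at h1
      have h2 : W.mean (T a) = 0 := by
        unfold WeightedGraph.mean; rw [h1, zero_div]
      rw [h2]
      simp only [sub_zero]
      apply div_le_of_le_mul₀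
      · exact mul_nonneg zero_le_two (Finset.sum_nonneg fun x _ =>
          mul_nonneg (Real.rpow_nonneg (abs_nonneg _) _) (hw x).le)
      · positivity
      · rw [hT]
        refine (energy_le W A hne D hD hκ hp a).trans ?_
        have h3 := norm_eq W A hne D hD hκ hp a
        refine mul_le_mul_of_nonneg_left ?_ (by positivity)
        refine le_trans ?_ (mul_le_mul_of_nonneg_left h3 zero_le_two)
        rw [Finset.mul_sum]
        refine Finset.sum_le_sum fun γ _ => ?_
        have h4 := single W A hne hdisj D hD1 hD hκ hp γ hS (hM γ)
        have := mul_le_mul_of_nonneg_left h4 (Real.rpow_nonneg (abs_nonneg (a γ)) p)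
        linarith
    · positivity

end NuAux

open WeightedGraph in
/-- Theorem 8.5 (the discrete analogue of the main Theorem 1.1): for nonempty
pairwise disjoint subsets `A_0, …, A_k ⊆ V`, with `D := min_{α ≠ β} d(A_α, A_β)`,
`ν_{k,p}(G,μ)^{1/p} ≤ (2/D) max_α log(e (μ(V) - ∑_{β ≠ α} μ(A_β)) / μ(A_α))`. -/
theorem nu_rpow_le_of_separated_sets
    {V : Type*} [Fintype V] (W : WeightedGraph V) (p : ℝ) (hp : 1 ≤ p)
    (k : ℕ) (hk₁ : 1 ≤ k) (hk₂ : k ≤ Fintype.card V - 1)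
    (A : Fin (k + 1) → Set V) (hne : ∀ α, (A α).Nonempty)
    (hdisj : ∀ α β, α ≠ β → Disjoint (A α) (A β))
    (D : ℕ) (hD : D = sInf {n : ℕ | ∃ α β, α ≠ β ∧ n = W.setDist (A α) (A β)}) :
    W.nu k p ^ (1 / p) ≤
      (2 / (D : ℝ)) * ⨆ α, Real.log
        (Real.exp 1 * (W.swt Set.univ - ∑ β ∈ Finset.univ.erase α, W.swt (A β)) /
          W.swt (A α)) := by
  have hcard : 2 ≤ Fintype.card V := by omega
  have hw := NuAux.vwt_pos W hcard
  have h01 : (0 : Fin (k + 1)) ≠ Fin.last k := by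
    intro h
    have := congrArg Fin.val h
    simp at this
    omega
  have hDmem : D ∈ {n : ℕ | ∃ α β, α ≠ β ∧ n = W.setDist (A α) (A β)} := by
    rw [hD]
    exact Nat.sInf_mem ⟨_, 0, Fin.last k, h01, rfl⟩
  have hD1 : 1 ≤ D := by
    obtain ⟨α, β, hab, h⟩ := hDmem
    rw [h]
    exact NuAux.setDist_pos W (hne α) (hne β) (hdisj α β hab)
  have hD2 : ∀ α β, α ≠ β → D ≤ W.setDist (A α) (A β) := by
    intro α β h
    rw [hD]
    exact Nat.sInf_le ⟨α, β, h, rfl⟩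
  have hA : ∀ α, 0 < W.swt (A α) := by
    intro α
    obtain ⟨x, hx⟩ := hne α
    exact Finset.sum_pos (fun x _ => hw x) ⟨x, by simpa using hx⟩
  have hm : ∀ α, W.swt (A α) ≤
      W.swt Set.univ - ∑ β ∈ Finset.univ.erase α, W.swt (A β) := by
    intro α
    have h3 : W.swt (A α) + ∑ β ∈ Finset.univ.erase α, W.swt (A β) = ∑ β, W.swt (A β) :=
      Finset.add_sum_erase _ (fun β => W.swt (A β)) (Finset.mem_univ α)
    have h4 : ∑ β, W.swt (A β) ≤ W.swt Set.univ := by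
      simp only [NuAux.swt_eq]
      rw [Finset.sum_comm]
      refine Finset.sum_le_sum fun x _ => ?_
      rw [← Finset.sum_mul]
      refine mul_le_mul_of_nonneg_right ?_ (hw x).le
      simp only [Set.mem_univ, if_true]
      by_cases h : ∃ β, x ∈ A β
      · obtain ⟨β, hβ⟩ := h
        rw [Finset.sum_eq_single β]
        · simp [hβ]
        · intro γ _ hγ
          rw [if_neg (fun h => Set.disjoint_left.1 (hdisj γ β hγ) h hβ)]
        · simp
      · push Not at h
        simp [h]
    linarith
  set F : Fin (k + 1) → ℝ := fun α => Real.log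
        (Real.exp 1 * (W.swt Set.univ - ∑ β ∈ Finset.univ.erase α, W.swt (A β)) /
          W.swt (A α)) with hF
  have hFS : ∀ α, F α ≤ ⨆ α, F α := fun α => le_ciSup (Set.finite_range F).bddAbove α
  set S := ⨆ α, F α with hSdef
  have hFeq : ∀ α, F α = 1 + Real.log
      ((W.swt Set.univ - ∑ β ∈ Finset.univ.erase α, W.swt (A β)) / W.swt (A α)) := by
    intro α
    have := hA α
    have := hm α
    simp only [hF]
    rw [mul_div_assoc, Real.log_mul (Real.exp_pos 1).ne' (div_pos (by linarith) (by linarith)).ne',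
      Real.log_exp]
  have hS : 1 ≤ S := by
    refine le_trans ?_ (hFS 0)
    rw [hFeq]
    have := Real.log_nonneg ((one_le_div (hA 0)).2 (hm 0))
    linarith
  have hDr : (0 : ℝ) < D := by exact_mod_cast hD1
  have hκ : 0 < 2 / (D : ℝ) * S := by positivity
  have hκD : 2 / (D : ℝ) * S * (D / 2) = S := by field_simp
  have hnu := NuAux.nu_le W hk₁ hcard A hne hdisj D hD1 hD2 hκ hp (by rw [hκD]; exact hS) (by
    intro α
    rw [hκD, ← div_le_iff₀ (hA α)]
    have := hA α
    have := hm α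
    have h5 := hFS α
    rw [hFeq] at h5
    rw [← Real.log_le_iff_le_exp (div_pos (by linarith) (by linarith))]
    linarith)
  have hnu0 : 0 ≤ W.nu k p := by
    apply Real.sInf_nonneg
    rintro s ⟨L, -, -, rfl⟩
    apply Real.sSup_nonneg
    rintro r ⟨φ, -, -, rfl⟩
    apply div_nonneg
    · exact Finset.sum_nonneg fun x _ => Finset.sum_nonneg fun y _ =>
        mul_nonneg (Real.rpow_nonneg (abs_nonneg _) _) (W.nonneg x y)
    · exact mul_nonneg zero_le_two (Finset.sum_nonneg fun x _ =>
        mul_nonneg (Real.rpow_nonneg (abs_nonneg _) _) (hw x).le)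
  calc W.nu k p ^ (1 / p) ≤ ((2 / (D : ℝ) * S) ^ p) ^ (1 / p) :=
        Real.rpow_le_rpow hnu0 hnu (by positivity)
    _ = 2 / (D : ℝ) * S := by
        rw [← Real.rpow_mul hκ.le, mul_one_div_cancel (by linarith), Real.rpow_one]
end
end
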